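/- arXiv:1208.5241 — 2 statements merged into one kernel-verified Lean document; each statement's English description precedes it below -/
import Mathlib

section
/- Let m ∈ {0,1} and p ∈ [1,∞], or m ≥ 2 an integer and p ∈ (1,∞], and set γ = max(0, m − 1/p). There is a constant C > 0, depending only on f, D, m and p, such that for every ν ∈ (0,1] and every t > 0, the solution satisfies |u(t)|_{m,p} ≤ C max(ν^{−γ}, t^{−γ}). -/
open MeasureTheory Set
open scoped ENNReal

/-- The `L^p` norm (on the circle, i.e. over one period `(0,1]`) of the `m`-th
derivative of a function `v : ℝ → ℝ` (identified with a function on `S¹ = ℝ/ℤ`). -/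
noncomputable def sobLp (m : ℕ) (p : ℝ≥0∞) (v : ℝ → ℝ) : ℝ :=
  (eLpNorm (iteratedDeriv m v) p (volume.restrict (Ioc (0:ℝ) 1))).toReal

/-- `u` is a smooth, space-periodic, zero-mean-value solution of the generalised
Burgers equation `u_t + f'(u) u_x - ν u_xx = 0` with strongly convex `f` and
nonzero initial condition. -/
structure IsBurgersSolution (f : ℝ → ℝ) (σ ν : ℝ) (u : ℝ → ℝ → ℝ) : Prop where
  hf : ContDiff ℝ (⊤ : ℕ∞) f
  hσ : 0 < σ
  hconv : ∀ y, σ ≤ iteratedDeriv 2 f y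
  hν : 0 < ν
  hu : ContDiffOn ℝ (⊤ : ℕ∞) (Function.uncurry u) (Ici (0:ℝ) ×ˢ univ)
  hper : ∀ t x, u t (x + 1) = u t x
  hpde : ∀ t, 0 < t → ∀ x,
    deriv (fun s => u s x) t + deriv f (u t x) * deriv (u t) x
      - ν * deriv (deriv (u t)) x = 0
  hmean : ∀ t, 0 ≤ t → ∫ x in Ioc (0:ℝ) 1, u t x = 0
  hinit : ∃ x, u 0 x ≠ 0

/-- The quantity `D = max(|u₀|₁⁻¹, |u₀|_{1,∞})`. -/
noncomputable def burgersD (u : ℝ → ℝ → ℝ) : ℝ :=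
  max (sobLp 0 1 (u 0))⁻¹ (sobLp 1 ⊤ (u 0))

/-- `T₁ = D⁻² C̃⁻¹ / 4`. -/
noncomputable def burgersT₁ (D Ct : ℝ) : ℝ := (D ^ 2)⁻¹ * Ct⁻¹ / 4

/-- `T₂ = max(3T₁/2, 2Dσ⁻¹)`. -/
noncomputable def burgersT₂ (σ D Ct : ℝ) : ℝ :=
  max (3 / 2 * burgersT₁ D Ct) (2 * D * σ⁻¹)

/-- Time average over `[T₁, T₂]`. -/
noncomputable def timeAvg (T₁ T₂ : ℝ) (A : ℝ → ℝ) : ℝ :=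
  (T₂ - T₁)⁻¹ * ∫ t in T₁..T₂, A t

/-- The structure function `S_p(ℓ)`. -/
noncomputable def structFun (T₁ T₂ : ℝ) (u : ℝ → ℝ → ℝ) (p ℓ : ℝ) : ℝ :=
  timeAvg T₁ T₂ (fun t => ∫ x in Ioc (0:ℝ) 1, |u t (x + ℓ) - u t x| ^ p)



/-- First touching principle. -/
lemma burg_touch (Φ : ℝ → ℝ → ℝ) (t0 t1 : ℝ)
    (hc : ContinuousOn (Function.uncurry Φ) (Icc t0 t1 ×ˢ univ))
    (hper : ∀ t x, Φ t (x + 1) = Φ t x) (h0 : ∀ x, Φ t0 x < 0)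
    (hd : ∀ t ∈ Ioc t0 t1, ∀ x, Φ t x = 0 → (∀ y, Φ t y ≤ 0) →
      ∃ d < 0, HasDerivAt (fun s => Φ s x) d t) :
    ∀ t ∈ Icc t0 t1, ∀ x, Φ t x < 0 := by
  by_contra hcon
  push Not at hcon
  obtain ⟨tb, htb, xb, hxb⟩ := hcon
  have hfr : ∀ t x, Φ t (Int.fract x) = Φ t x := by
    intro t x
    have hp : Function.Periodic (Φ t) 1 := hper t
    have := hp.sub_int_mul_eq (x := x) ⌊x⌋
    rw [mul_one] at this
    exact this
  set K : Set (ℝ × ℝ) := Icc t0 t1 ×ˢ Icc (0:ℝ) 1 with hK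
  have hKc : IsCompact K := isCompact_Icc.prod isCompact_Icc
  have hcK : ContinuousOn (Function.uncurry Φ) K :=
    hc.mono (prod_mono_right (subset_univ _))
  set S : Set (ℝ × ℝ) := K ∩ (Function.uncurry Φ) ⁻¹' (Ici 0) with hS
  have hSc : IsCompact S :=
    hKc.of_isClosed_subset (hcK.preimage_isClosed_of_isClosed hKc.isClosed isClosed_Ici)
      inter_subset_left
  have hfI : ∀ x : ℝ, Int.fract x ∈ Icc (0:ℝ) 1 := fun x =>
    ⟨Int.fract_nonneg x, (Int.fract_lt_one x).le⟩
  have hne : S.Nonempty := by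
    refine ⟨(tb, Int.fract xb), ⟨htb, hfI xb⟩, ?_⟩
    change (0:ℝ) ≤ Φ tb (Int.fract xb)
    rw [hfr]; exact hxb
  obtain ⟨⟨ts, xs⟩, hsS, hmin⟩ := hSc.exists_isMinOn hne continuous_fst.continuousOn
  have hts : ts ∈ Icc t0 t1 := hsS.1.1
  have hpos : 0 ≤ Φ ts xs := hsS.2
  have hlt : t0 < ts := by
    rcases lt_or_eq_of_le hts.1 with h | h
    · exact h
    · exfalso; have := h0 xs; rw [h] at this; linarith
  have hbefore : ∀ s ∈ Ico t0 ts, ∀ x, Φ s x < 0 := by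
    intro s hs x
    by_contra hx
    push Not at hx
    have hmem : (s, Int.fract x) ∈ S := by
      refine ⟨⟨⟨hs.1, hs.2.le.trans hts.2⟩, hfI x⟩, ?_⟩
      change (0:ℝ) ≤ Φ s (Int.fract x)
      rw [hfr]; exact hx
    have := hmin hmem
    simp only [mem_ofPred_eq] at this
    exact absurd hs.2 (not_lt.mpr this)
  have hcx : ∀ x, ContinuousWithinAt (fun s => Φ s x) (Icc t0 t1) ts := by
    intro x
    have h1 := hc (ts, x) ⟨hts, mem_univ _⟩
    have h2 : ContinuousWithinAt (fun s : ℝ => (s, x)) (Icc t0 t1) ts := by fun_prop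
    exact ContinuousWithinAt.comp (g := Function.uncurry Φ) (f := fun s : ℝ => (s, x))
      h1 h2 (fun s hs => ⟨hs, mem_univ _⟩)
  have hle : ∀ y, Φ ts y ≤ 0 := by
    intro y
    have h1 : Filter.Tendsto (fun s => Φ s y) (nhdsWithin ts (Ico t0 ts)) (nhds (Φ ts y)) :=
      (hcx y).mono (fun s hs => ⟨hs.1, hs.2.le.trans hts.2⟩)
    have : (nhdsWithin ts (Ico t0 ts)).NeBot := by
      rw [← mem_closure_iff_nhdsWithin_neBot, closure_Ico hlt.ne]
      exact ⟨hlt.le, le_rfl⟩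
    refine le_of_tendsto h1 ?_
    filter_upwards [self_mem_nhdsWithin] with s hs
    exact (hbefore s hs y).le
  obtain ⟨d, hd0, hder⟩ := hd ts ⟨hlt, hts.2⟩ xs (le_antisymm (hle xs) hpos) hle
  have hz : Φ ts xs = 0 := le_antisymm (hle xs) hpos
  have h1 := hder.tendsto_slope
  have h2 : ∀ᶠ s in nhdsWithin ts {ts}ᶜ, slope (fun s => Φ s xs) ts s < 0 :=
    h1.eventually (gt_mem_nhds hd0)
  have h3 : ∀ᶠ s in nhdsWithin ts (Ico t0 ts), slope (fun s => Φ s xs) ts s < 0 :=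
    h2.filter_mono (nhdsWithin_mono _ (fun s hs => by
      simp only [mem_compl_iff, mem_singleton_iff]; exact hs.2.ne))
  have : (nhdsWithin ts (Ico t0 ts)).NeBot := by
    rw [← mem_closure_iff_nhdsWithin_neBot, closure_Ico hlt.ne]
    exact ⟨hlt.le, le_rfl⟩
  obtain ⟨s, hs1, hs2⟩ := (h3.and self_mem_nhdsWithin).exists
  rw [slope_def_field, hz, sub_zero] at hs1
  have hneg := hbefore s hs2 xs
  have : 0 < Φ s xs / (s - ts) := div_pos_of_neg_of_neg hneg (by linarith [hs2.2])
  linarith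

/-- Second derivative test at a global maximum. -/
lemma burg_max_test (φ φ' : ℝ → ℝ) (φ'' x : ℝ) (h : ∀ y, HasDerivAt φ (φ' y) y)
    (h2 : HasDerivAt φ' φ'' x) (hmax : ∀ y, φ y ≤ φ x) : φ' x = 0 ∧ φ'' ≤ 0 := by
  have h0 : φ' x = 0 :=
    IsLocalMax.hasDerivAt_eq_zero (Filter.Eventually.of_forall hmax) (h x)
  refine ⟨h0, ?_⟩
  by_contra hcon
  push Not at hcon
  have h3 : ∀ᶠ s in nhdsWithin x {x}ᶜ, 0 < slope φ' x s :=
    h2.tendsto_slope.eventually (lt_mem_nhds hcon)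
  have h4 : ∀ᶠ s in nhdsWithin x (Ioi x), 0 < slope φ' x s :=
    h3.filter_mono (nhdsWithin_mono _ (fun s hs => by
      simp only [mem_compl_iff, mem_singleton_iff]; exact (ne_of_gt hs)))
  obtain ⟨e, he, hsub⟩ := mem_nhdsGT_iff_exists_Ioo_subset.mp h4
  have he' : x < e := he
  have hmono : StrictMonoOn φ (Icc x ((x + e) / 2)) := by
    apply strictMonoOn_of_deriv_pos (convex_Icc _ _)
    · exact fun y _ => (h y).continuousAt.continuousWithinAt
    · intro y hy
      rw [interior_Icc] at hy
      rw [(h y).deriv]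
      have := hsub ⟨hy.1, by linarith [hy.2]⟩
      simp only [mem_ofPred_eq] at this
      rw [slope_def_field, h0, sub_zero] at this
      have hyx : 0 < y - x := by linarith [hy.1]
      exact (div_pos_iff_of_pos_right hyx).mp this
  have := hmono (left_mem_Icc.mpr (by linarith)) (right_mem_Icc.mpr (by linarith))
    (by linarith : x < (x + e) / 2)
  linarith [hmax ((x + e) / 2)]

/-- Bound for the derivatives of a composition. -/
lemma burg_comp_bound (h : ℝ → ℝ) (hh : ContDiff ℝ (⊤ : ℕ∞) h) (D A : ℝ) (hA : 1 ≤ A) (n : ℕ) :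
    ∃ C, 0 ≤ C ∧ ∀ v : ℝ → ℝ, ContDiff ℝ (⊤ : ℕ∞) v → ∀ x M, 1 ≤ M → |v x| ≤ D →
      (∀ j, 1 ≤ j → j ≤ n → |iteratedDeriv j v x| ≤ A * M ^ j) →
      |iteratedDeriv n (fun y => h (v y)) x| ≤ C * M ^ n := by
  have hb : ∀ i : ℕ, ∃ B, ∀ y ∈ Icc (-D) D, ‖iteratedDeriv i h y‖ ≤ B := fun i =>
    isCompact_Icc.exists_bound_of_continuousOn
      (hh.continuous_iteratedDeriv i (by exact_mod_cast le_top)).continuousOn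
  choose B hB using hb
  set B' := ∑ i ∈ Finset.range (n + 1), |B i| with hB'
  have hB0 : 0 ≤ B' := Finset.sum_nonneg (fun i _ => abs_nonneg _)
  refine ⟨n.factorial * B' * A ^ n, by positivity, ?_⟩
  intro v hv x M hM hvx hj
  have key := norm_iteratedFDeriv_comp_le (𝕜 := ℝ) (n := n) hh hv (by exact_mod_cast le_top) x
    (C := B') (D := A * M) ?_ ?_
  · rw [norm_iteratedFDeriv_eq_norm_iteratedDeriv, Real.norm_eq_abs] at key
    calc |iteratedDeriv n (fun y => h (v y)) x| ≤ n.factorial * B' * (A * M) ^ n := key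
      _ = _ := by rw [mul_pow]; ring
  · intro i hi
    rw [norm_iteratedFDeriv_eq_norm_iteratedDeriv]
    calc _ ≤ B i := hB i _ (abs_le.mp hvx)
      _ ≤ |B i| := le_abs_self _
      _ ≤ B' := Finset.single_le_sum (f := fun i => |B i|) (fun i _ => abs_nonneg _)
        (Finset.mem_range.mpr (by omega))
  · intro i hi1 hi2
    rw [norm_iteratedFDeriv_eq_norm_iteratedDeriv, Real.norm_eq_abs, mul_pow]
    refine (hj i hi1 hi2).trans ?_
    gcongr
    exact le_self_pow₀ hA (by omega)

/-- The commutator of the transport operator with the k-th derivative. -/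
noncomputable def burgS (f : ℝ → ℝ) (k : ℕ) (v : ℝ → ℝ) (x : ℝ) : ℝ :=
  iteratedDeriv k (fun y => deriv f (v y) * deriv v y) x
    - deriv f (v x) * iteratedDeriv (k + 1) v x

lemma burg_S_bound (f : ℝ → ℝ) (hf : ContDiff ℝ (⊤ : ℕ∞) f) (D A : ℝ) (hA : 1 ≤ A) (k : ℕ)
    (hk : 1 ≤ k) :
    ∃ C, 0 ≤ C ∧ ∀ v : ℝ → ℝ, ContDiff ℝ (⊤ : ℕ∞) v → ∀ x M Y, 1 ≤ M → 0 ≤ Y → Y ≤ A →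
      |v x| ≤ D → |iteratedDeriv 1 v x| ≤ A * M * Y →
      (∀ j, 1 ≤ j → j < k → |iteratedDeriv j v x| ≤ A * M ^ j * Y) →
      |burgS f k v x| ≤ C * (M * |iteratedDeriv k v x| + M ^ (k + 1) * Y) := by
  obtain ⟨n, rfl⟩ : ∃ n, k = n + 1 := ⟨k - 1, by omega⟩
  have hF1 : ContDiff ℝ (⊤ : ℕ∞) (deriv f) := by
    have h := hf
    rw [contDiff_infty_iff_deriv] at h
    exact h.2
  have hF2 : ContDiff ℝ (⊤ : ℕ∞) (deriv (deriv f)) := by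
    have h := hF1
    rw [contDiff_infty_iff_deriv] at h
    exact h.2
  have hA2 : 1 ≤ A ^ 2 := one_le_pow₀ hA
  choose C1 hC1 hC1' using burg_comp_bound (deriv f) hF1 D (A ^ 2) hA2
  choose C2 hC2 hC2' using burg_comp_bound (deriv (deriv f)) hF2 D (A ^ 2) hA2
  set E := ∑ i ∈ Finset.range (n + 1), (n.choose i : ℝ) * C2 i * A ^ 2 with hE
  have hE0 : 0 ≤ E := Finset.sum_nonneg (fun i _ => by have := hC2 i; positivity)
  refine ⟨∑ i ∈ Finset.range (n + 1), ((n + 1).choose (i + 1) : ℝ) * (C1 (i + 1) * A + E * A ^ 2),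
    Finset.sum_nonneg (fun i _ => by have := hC1 (i + 1); positivity), ?_⟩
  intro v hv x M Y hM hY0 hYA hvD hv1 hj
  have hM0 : 0 ≤ M := by linarith
  have hA0 : 0 ≤ A := by linarith
  have hv' : ContDiff ℝ (⊤ : ℕ∞) (deriv v) := by
    have h := hv
    rw [contDiff_infty_iff_deriv] at h
    exact h.2
  have hj' : ∀ j, 1 ≤ j → j ≤ n → |iteratedDeriv j v x| ≤ A ^ 2 * M ^ j := by
    intro j h1 h2
    refine (hj j h1 (by omega)).trans ?_
    calc A * M ^ j * Y ≤ A * M ^ j * A := by gcongr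
      _ = _ := by ring
  set w := |iteratedDeriv (n + 1) v x| with hw
  have hw0 : 0 ≤ w := abs_nonneg _
  have hclaim1 : |iteratedDeriv (n + 1) (fun y => deriv f (v y)) x| ≤ E * (w + M ^ (n + 1)) := by
    have hd : deriv (fun y => deriv f (v y)) = fun y => deriv (deriv f) (v y) * deriv v y := by
      funext y
      exact (((hF1.differentiable (by simp)) (v y)).hasDerivAt.comp y
        ((hv.differentiable (by simp)) y).hasDerivAt).deriv
    rw [iteratedDeriv_succ', hd, iteratedDeriv_fun_mul
      (f := fun y => deriv (deriv f) (v y)) (((hF2.comp hv).contDiffAt).of_le (by exact_mod_cast le_top))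
      ((hv'.contDiffAt).of_le (by exact_mod_cast le_top)), hE, Finset.sum_mul]
    refine (Finset.abs_sum_le_sum_abs _ _).trans (Finset.sum_le_sum ?_)
    intro i hi
    rw [Finset.mem_range] at hi
    rw [← iteratedDeriv_succ', abs_mul, abs_mul, Nat.abs_cast]
    have h1 := hC2' i v hv x M hM hvD (fun j h1 h2 => hj' j h1 (by omega))
    have h2 : M ^ i * |iteratedDeriv (n - i + 1) v x| ≤ A ^ 2 * (w + M ^ (n + 1)) := by
      rcases Nat.eq_zero_or_pos i with h0 | h0
      · subst h0
        simp only [pow_zero, one_mul, Nat.sub_zero]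
        calc |iteratedDeriv (n + 1) v x| = 1 * (w + 0) := by rw [hw]; ring
          _ ≤ A ^ 2 * (w + M ^ (n + 1)) := by gcongr; positivity
      · have := hj' (n - i + 1) (by omega) (by omega)
        calc M ^ i * |iteratedDeriv (n - i + 1) v x|
            ≤ M ^ i * (A ^ 2 * M ^ (n - i + 1)) := by gcongr
          _ = A ^ 2 * (0 + M ^ (i + (n - i + 1))) := by rw [pow_add]; ring
          _ = A ^ 2 * (0 + M ^ (n + 1)) := by rw [show i + (n - i + 1) = n + 1 by omega]
          _ ≤ _ := by gcongr
    have := hC2 i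
    calc (n.choose i : ℝ) * |iteratedDeriv i (fun y => deriv (deriv f) (v y)) x| *
          |iteratedDeriv (n - i + 1) v x|
        ≤ (n.choose i : ℝ) * (C2 i * M ^ i) * |iteratedDeriv (n - i + 1) v x| := by gcongr
      _ = (n.choose i : ℝ) * C2 i * (M ^ i * |iteratedDeriv (n - i + 1) v x|) := by ring
      _ ≤ (n.choose i : ℝ) * C2 i * (A ^ 2 * (w + M ^ (n + 1))) := by gcongr
      _ = _ := by ring
  unfold burgS
  rw [iteratedDeriv_fun_mul (f := fun y => deriv f (v y))
      (((hF1.comp hv).contDiffAt).of_le (by exact_mod_cast le_top))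
      ((hv'.contDiffAt).of_le (by exact_mod_cast le_top)), Finset.sum_range_succ']
  simp only [iteratedDeriv_zero, Nat.choose_zero_right, Nat.cast_one, one_mul, Nat.sub_zero]
  rw [← iteratedDeriv_succ', add_sub_cancel_right, Finset.sum_mul]
  refine (Finset.abs_sum_le_sum_abs _ _).trans (Finset.sum_le_sum ?_)
  intro i hi
  rw [Finset.mem_range] at hi
  rw [← iteratedDeriv_succ', abs_mul, abs_mul, Nat.abs_cast, mul_assoc, mul_assoc]
  refine mul_le_mul_of_nonneg_left ?_ (Nat.cast_nonneg _)
  set Z := M * w + M ^ (n + 1 + 1) * Y with hZ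
  have hZ0 : 0 ≤ Z := by positivity
  have hC1i := hC1 (i + 1)
  rcases Nat.lt_or_ge i n with hin | hin
  · have h1 := hC1' (i + 1) v hv x M hM hvD (fun j h1 h2 => hj' j h1 (by omega))
    have h2 : M ^ (i + 1) * |iteratedDeriv (n + 1 - (i + 1) + 1) v x| ≤ A * Z := by
      rcases Nat.eq_zero_or_pos i with h0 | h0
      · subst h0
        simp only [zero_add, pow_one, Nat.add_sub_cancel]
        calc M * |iteratedDeriv (n + 1) v x| = 1 * (M * w + 0) := by rw [hw]; ring
          _ ≤ A * Z := by rw [hZ]; gcongr; positivity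
      · have := hj (n + 1 - (i + 1) + 1) (by omega) (by omega)
        calc M ^ (i + 1) * |iteratedDeriv (n + 1 - (i + 1) + 1) v x|
            ≤ M ^ (i + 1) * (A * M ^ (n + 1 - (i + 1) + 1) * Y) := by gcongr
          _ = A * (0 + M ^ ((i + 1) + (n + 1 - (i + 1) + 1)) * Y) := by
            rw [pow_add]; ring
          _ = A * (0 + M ^ (n + 1 + 1) * Y) := by
            rw [show (i + 1) + (n + 1 - (i + 1) + 1) = n + 1 + 1 by omega]
          _ ≤ A * Z := by rw [hZ]; gcongr; positivity
    calc |iteratedDeriv (i + 1) (fun y => deriv f (v y)) x| *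
          |iteratedDeriv (n + 1 - (i + 1) + 1) v x|
        ≤ (C1 (i + 1) * M ^ (i + 1)) * |iteratedDeriv (n + 1 - (i + 1) + 1) v x| := by gcongr
      _ = C1 (i + 1) * (M ^ (i + 1) * |iteratedDeriv (n + 1 - (i + 1) + 1) v x|) := by ring
      _ ≤ C1 (i + 1) * (A * Z) := by gcongr
      _ = (C1 (i + 1) * A + 0) * Z := by ring
      _ ≤ _ := by gcongr; positivity
  · obtain rfl : i = n := by omega
    have e : i + 1 - (i + 1) + 1 = 1 := by omega
    rw [e]
    calc |iteratedDeriv (i + 1) (fun y => deriv f (v y)) x| * |iteratedDeriv 1 v x|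
        ≤ (E * (w + M ^ (i + 1))) * (A * M * Y) := by gcongr
      _ = E * A * (M * w * Y + M ^ (i + 1 + 1) * Y) := by ring
      _ ≤ E * A * (M * w * A + M ^ (i + 1 + 1) * Y * A) := by
          refine mul_le_mul_of_nonneg_left (add_le_add ?_ ?_) (by positivity)
          · gcongr
          · exact le_mul_of_one_le_right (by positivity) hA
      _ = (0 + E * A ^ 2) * Z := by rw [hZ]; ring
      _ ≤ _ := by gcongr; positivity


lemma burg_smooth_x {f : ℝ → ℝ} {σ ν : ℝ} {u : ℝ → ℝ → ℝ} (h : IsBurgersSolution f σ ν u)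
    {t : ℝ} (ht : 0 ≤ t) : ContDiff ℝ (⊤ : ℕ∞) (u t) := by
  have h1 : ContDiff ℝ (⊤ : ℕ∞) (fun x : ℝ => (t, x)) := by fun_prop
  exact h.hu.comp_contDiff h1 (fun x => ⟨ht, mem_univ _⟩)

/-- Spatial derivatives, as functions of time and space. -/
noncomputable def burgW (u : ℝ → ℝ → ℝ) (k : ℕ) (t x : ℝ) : ℝ := iteratedDeriv k (u t) x

lemma burg_nhds {t x : ℝ} (ht : 0 < t) : Ioi (0:ℝ) ×ˢ (univ : Set ℝ) ∈ nhds (t, x) :=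
  (isOpen_Ioi.prod isOpen_univ).mem_nhds ⟨ht, mem_univ _⟩

lemma burg_hasDeriv_x {g : ℝ × ℝ → ℝ} {t x : ℝ} (hg : DifferentiableAt ℝ g (t, x)) :
    HasDerivAt (fun y => g (t, y)) (fderiv ℝ g (t, x) (0, 1)) x := by
  have h1 : HasDerivAt (fun y : ℝ => (t, y)) ((0:ℝ), (1:ℝ)) x :=
    (hasDerivAt_const x t).prodMk (hasDerivAt_id x)
  exact hg.hasFDerivAt.comp_hasDerivAt x h1

lemma burg_hasDeriv_t {g : ℝ × ℝ → ℝ} {t x : ℝ} (hg : DifferentiableAt ℝ g (t, x)) :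
    HasDerivAt (fun s => g (s, x)) (fderiv ℝ g (t, x) (1, 0)) t := by
  have h1 : HasDerivAt (fun s : ℝ => (s, x)) ((1:ℝ), (0:ℝ)) t :=
    (hasDerivAt_id t).prodMk (hasDerivAt_const t x)
  exact hg.hasFDerivAt.comp_hasDerivAt t h1

lemma burgW_aux {f : ℝ → ℝ} {σ ν : ℝ} {u : ℝ → ℝ → ℝ} (h : IsBurgersSolution f σ ν u) (k : ℕ) :
    (∀ t, 0 < t → ∀ x, ContDiffAt ℝ (⊤ : ℕ∞) (Function.uncurry (burgW u k)) (t, x)) := by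
  induction k with
  | zero =>
    intro t ht x
    have : Function.uncurry (burgW u 0) = Function.uncurry u := by
      funext ⟨s, y⟩; simp [burgW]
    rw [this]
    refine h.hu.contDiffAt (Filter.mem_of_superset (burg_nhds ht) ?_)
    exact prod_mono_left Ioi_subset_Ici_self
  | succ k ih =>
    intro t ht x
    have h1 : ContDiffAt ℝ (⊤ : ℕ∞) (fun z => fderiv ℝ (Function.uncurry (burgW u k)) z (0, 1))
        (t, x) := by
      have := (ih t ht x).fderiv_right (m := (⊤ : ℕ∞)) (by simp)
      exact this.clm_apply contDiffAt_const
    refine h1.congr_of_eventuallyEq ?_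
    filter_upwards [burg_nhds ht] with ⟨s, y⟩ hs
    have h2 := burg_hasDeriv_x (((ih s hs.1 y)).differentiableAt (by simp))
    have h3 := h2.deriv
    rw [← h3]
    simp only [Function.uncurry, burgW, iteratedDeriv_succ]

lemma burgW_fderiv_x {f : ℝ → ℝ} {σ ν : ℝ} {u : ℝ → ℝ → ℝ} (h : IsBurgersSolution f σ ν u) (k : ℕ)
    {t : ℝ} (ht : 0 < t) (x : ℝ) :
    fderiv ℝ (Function.uncurry (burgW u k)) (t, x) (0, 1) = burgW u (k + 1) t x := by
  have h2 := burg_hasDeriv_x (((burgW_aux h k t ht x)).differentiableAt (by simp))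
  rw [← h2.deriv]
  simp only [Function.uncurry, burgW, iteratedDeriv_succ]

lemma burgW_hasDeriv_x {f : ℝ → ℝ} {σ ν : ℝ} {u : ℝ → ℝ → ℝ} (h : IsBurgersSolution f σ ν u)
    (k : ℕ) {t : ℝ} (ht : 0 ≤ t) (x : ℝ) :
    HasDerivAt (burgW u k t) (burgW u (k + 1) t x) x := by
  have := ((burg_smooth_x h ht).differentiable_iteratedDeriv k
    (by exact_mod_cast WithTop.coe_lt_top k)) x
  have h2 := this.hasDerivAt
  rw [← iteratedDeriv_succ] at h2
  exact h2

lemma burgV_succ {f : ℝ → ℝ} {σ ν : ℝ} {u : ℝ → ℝ → ℝ} (h : IsBurgersSolution f σ ν u) (k : ℕ)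
    {t : ℝ} (ht : 0 < t) (x : ℝ) :
    fderiv ℝ (Function.uncurry (burgW u (k + 1))) (t, x) (1, 0) =
      deriv (fun y => fderiv ℝ (Function.uncurry (burgW u k)) (t, y) (1, 0)) x := by
  have hd : DifferentiableAt ℝ (fderiv ℝ (Function.uncurry (burgW u k))) (t, x) :=
    ((burgW_aux h k t ht x).fderiv_right (m := (⊤ : ℕ∞)) (by simp)).differentiableAt (by simp)
  have hs : IsSymmSndFDerivAt ℝ (Function.uncurry (burgW u k)) (t, x) :=
    (burgW_aux h k t ht x).isSymmSndFDerivAt (by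
      simp only [minSmoothness_of_isRCLikeNormedField]
      exact WithTop.coe_le_coe.mpr (le_top : (2:ℕ∞) ≤ ⊤))
  have e1 : Function.uncurry (burgW u (k + 1)) =ᶠ[nhds (t, x)]
      fun z => fderiv ℝ (Function.uncurry (burgW u k)) z (0, 1) := by
    filter_upwards [burg_nhds ht] with ⟨s, y⟩ hs
    exact (burgW_fderiv_x h k hs.1 y).symm
  rw [e1.fderiv_eq]
  have e2 : ∀ w : ℝ × ℝ, HasFDerivAt (fun z => fderiv ℝ (Function.uncurry (burgW u k)) z w)
      ((fderiv ℝ (fderiv ℝ (Function.uncurry (burgW u k))) (t, x)).flip w) (t, x) := by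
    intro w
    have := hd.hasFDerivAt.clm_apply (hasFDerivAt_const w (t, x))
    simpa using this
  rw [(e2 (0, 1)).fderiv]
  have e3 := burg_hasDeriv_x (e2 (1, 0)).differentiableAt
  rw [e3.deriv, (e2 (1, 0)).fderiv]
  exact hs _ _

lemma burgW_hasDeriv_t {f : ℝ → ℝ} {σ ν : ℝ} {u : ℝ → ℝ → ℝ} (h : IsBurgersSolution f σ ν u)
    (k : ℕ) {t : ℝ} (ht : 0 < t) (x : ℝ) :
    HasDerivAt (fun s => burgW u k s x)
      (ν * burgW u (k + 2) t x - deriv f (u t x) * burgW u (k + 1) t x - burgS f k (u t) x) t := by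
  have h1 := burg_hasDeriv_t ((burgW_aux h k t ht x).differentiableAt (by simp))
  have h2 : ∀ k, (fun y => fderiv ℝ (Function.uncurry (burgW u k)) (t, y) (1, 0)) =
      iteratedDeriv k (fun y => ν * deriv (deriv (u t)) y - deriv f (u t y) * deriv (u t) y) := by
    intro k
    induction k with
    | zero =>
      funext y
      have h3 := burg_hasDeriv_t ((burgW_aux h 0 t ht y).differentiableAt (by simp))
      rw [← h3.deriv, iteratedDeriv_zero]
      have := h.hpde t ht y
      simp only [Function.uncurry, burgW, iteratedDeriv_zero]
      linarith
    | succ k ih =>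
      rw [iteratedDeriv_succ, ← ih]
      funext y
      exact burgV_succ h k ht y
  have h3 := congrFun (h2 k) x
  rw [h3] at h1
  refine h1.congr_deriv ?_
  have hu := burg_smooth_x h ht.le
  have hu' : ContDiff ℝ (⊤ : ℕ∞) (deriv (u t)) := (contDiff_infty_iff_deriv.mp hu).2
  have hu'' : ContDiff ℝ (⊤ : ℕ∞) (deriv (deriv (u t))) := (contDiff_infty_iff_deriv.mp hu').2
  have hf' : ContDiff ℝ (⊤ : ℕ∞) (deriv f) := (contDiff_infty_iff_deriv.mp h.hf).2
  have c1 : ContDiff ℝ (⊤ : ℕ∞) (fun y => ν * deriv (deriv (u t)) y) := contDiff_const.mul hu''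
  have c2 : ContDiff ℝ (⊤ : ℕ∞) (fun y => deriv f (u t y) * deriv (u t) y) :=
    (hf'.comp hu).mul hu'
  rw [iteratedDeriv_fun_sub (c1.contDiffAt.of_le (by exact_mod_cast le_top))
    (c2.contDiffAt.of_le (by exact_mod_cast le_top)), iteratedDeriv_const_mul_field]
  unfold burgS burgW
  rw [iteratedDeriv_succ' (n := k + 1), iteratedDeriv_succ' (n := k) (f := deriv (u t))]
  ring

lemma burgW_per {f : ℝ → ℝ} {σ ν : ℝ} {u : ℝ → ℝ → ℝ} (h : IsBurgersSolution f σ ν u) (k : ℕ)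
    (t x : ℝ) : burgW u k t (x + 1) = burgW u k t x := by
  have h1 : (fun z => u t (z + 1)) = u t := funext (h.hper t)
  have h2 := congrFun (iteratedDeriv_comp_add_const k (u t) 1) x
  rw [h1] at h2
  exact h2.symm

lemma burgW_cont {f : ℝ → ℝ} {σ ν : ℝ} {u : ℝ → ℝ → ℝ} (h : IsBurgersSolution f σ ν u) (k : ℕ) :
    ContinuousOn (Function.uncurry (burgW u k)) (Ioi (0:ℝ) ×ˢ univ) := by
  rintro ⟨t, x⟩ ⟨ht, -⟩
  exact (burgW_aux h k t ht x).continuousAt.continuousWithinAt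

lemma burgW_cont0 {f : ℝ → ℝ} {σ ν : ℝ} {u : ℝ → ℝ → ℝ} (h : IsBurgersSolution f σ ν u) :
    ContinuousOn (Function.uncurry (burgW u 0)) (Ici (0:ℝ) ×ˢ univ) := by
  have : Function.uncurry (burgW u 0) = Function.uncurry u := by
    funext ⟨s, y⟩; simp [burgW]
  rw [this]
  exact h.hu.continuousOn

lemma burgW_cont1 {f : ℝ → ℝ} {σ ν : ℝ} {u : ℝ → ℝ → ℝ} (h : IsBurgersSolution f σ ν u) :
    ContinuousOn (Function.uncurry (burgW u 1)) (Ici (0:ℝ) ×ˢ univ) := by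
  have h1 := h.hu.continuousOn_fderivWithin
    ((uniqueDiffOn_Ici (0:ℝ)).prod uniqueDiffOn_univ) (by simp)
  have h2 : ContinuousOn (fun z => fderivWithin ℝ (Function.uncurry u) (Ici (0:ℝ) ×ˢ univ) z (0, 1))
      (Ici (0:ℝ) ×ˢ univ) := h1.clm_apply continuousOn_const
  refine h2.congr ?_
  rintro ⟨t, x⟩ ht
  have hd := (h.hu.differentiableOn (by simp) (t, x) ht).hasFDerivWithinAt
  have h3 : HasDerivAt (fun y : ℝ => (t, y)) ((0:ℝ), (1:ℝ)) x :=
    (hasDerivAt_const x t).prodMk (hasDerivAt_id x)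
  have h4 := hd.comp_hasDerivWithinAt (s := univ) x h3.hasDerivWithinAt
    (fun y _ => ⟨ht.1, mem_univ _⟩)
  rw [hasDerivWithinAt_univ] at h4
  simp only [Function.uncurry, burgW, iteratedDeriv_one]
  exact h4.deriv


lemma burg_wmp {Ψ : ℝ → ℝ → ℝ} {B ν : ℝ} (hν : 0 ≤ ν)
    (hc : ContinuousOn (Function.uncurry Ψ) (Ici (0:ℝ) ×ˢ univ))
    (hper : ∀ t x, Ψ t (x + 1) = Ψ t x) (h0 : ∀ x, Ψ 0 x ≤ B)
    (hd : ∀ t, 0 < t → ∃ Ψx Ψxx Ψt : ℝ → ℝ, (∀ x, HasDerivAt (Ψ t) (Ψx x) x) ∧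
      (∀ x, HasDerivAt Ψx (Ψxx x) x) ∧ (∀ x, HasDerivAt (fun s => Ψ s x) (Ψt x) t) ∧
      ∀ x, Ψx x = 0 → Ψt x ≤ ν * Ψxx x) :
    ∀ t, 0 ≤ t → ∀ x, Ψ t x ≤ B := by
  intro T hT x
  refine le_of_forall_pos_le_add ?_
  intro ε hε
  set e := ε / (1 + T) with he
  have hT1 : 0 < 1 + T := by linarith
  have he0 : 0 < e := by positivity
  have key := burg_touch (fun t x => Ψ t x - B - e * (1 + t)) 0 T ?_ ?_ ?_ ?_ T ⟨hT, le_rfl⟩ x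
  · have : e * (1 + T) = ε := by rw [he]; field_simp
    linarith
  · have h1 : ContinuousOn (Function.uncurry Ψ) (Icc 0 T ×ˢ univ) :=
      hc.mono (prod_mono_left Icc_subset_Ici_self)
    have h2 : ContinuousOn (fun z : ℝ × ℝ => B + e * (1 + z.1)) (Icc 0 T ×ˢ univ) := by fun_prop
    refine (h1.sub h2).congr ?_
    rintro ⟨t, y⟩ _
    simp only [Function.uncurry, Pi.sub_apply]
    ring
  · intro t y; simp only [hper]
  · intro y
    have := h0 y
    linarith
  · intro t ht y hz hle
    obtain ⟨Ψx, Ψxx, Ψt, h1, h2, h3, h4⟩ := hd t ht.1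
    have hm := burg_max_test (fun y => Ψ t y - B - e * (1 + t)) Ψx (Ψxx y) y
      (fun z => ((h1 z).sub_const B).sub_const _) (h2 y) (fun z => by
        have := hle z
        linarith)
    refine ⟨Ψt y - e, ?_, ?_⟩
    · have := h4 y hm.1
      have h5 : ν * Ψxx y ≤ 0 := mul_nonpos_of_nonneg_of_nonpos hν hm.2
      linarith
    · have h5 : HasDerivAt (fun s : ℝ => e * (1 + s)) e t := by
        simpa using ((hasDerivAt_id t).const_add 1).const_mul e
      exact ((h3 y).sub_const B).sub h5

lemma burgS_zero (f v : ℝ → ℝ) (x : ℝ) : burgS f 0 v x = 0 := by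
  simp [burgS]

lemma burgS_one (f v : ℝ → ℝ) (hf : ContDiff ℝ (⊤ : ℕ∞) f) (hv : ContDiff ℝ (⊤ : ℕ∞) v) (x : ℝ) :
    burgS f 1 v x = iteratedDeriv 2 f (v x) * (iteratedDeriv 1 v x) ^ 2 := by
  have hf' : ContDiff ℝ (⊤ : ℕ∞) (deriv f) := (contDiff_infty_iff_deriv.mp hf).2
  have hv' : ContDiff ℝ (⊤ : ℕ∞) (deriv v) := (contDiff_infty_iff_deriv.mp hv).2
  have h1 : HasDerivAt (fun y => deriv f (v y)) (deriv (deriv f) (v x) * deriv v x) x :=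
    ((hf'.differentiable (by simp)) (v x)).hasDerivAt.comp x
      ((hv.differentiable (by simp)) x).hasDerivAt
  have h2 : HasDerivAt (deriv v) (deriv (deriv v) x) x :=
    ((hv'.differentiable (by simp)) x).hasDerivAt
  unfold burgS
  rw [iteratedDeriv_one, (h1.fun_mul h2).deriv]
  simp only [iteratedDeriv_succ, iteratedDeriv_zero]
  ring

lemma burg_lip {v : ℝ → ℝ} (hv : ContDiff ℝ (⊤ : ℕ∞) v) {D : ℝ}
    (hD : ∀ x, |iteratedDeriv 1 v x| ≤ D) (x y : ℝ) : |v x - v y| ≤ D * |x - y| := by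
  have := Convex.norm_image_sub_le_of_norm_deriv_le (f := v) (s := univ) (C := D) (x := y) (y := x)
    (fun z _ => (hv.differentiable (by simp)) z)
    (fun z _ => by rw [← iteratedDeriv_one]; exact hD z) convex_univ (mem_univ _) (mem_univ _)
  simpa using this

lemma burg_init1 {f : ℝ → ℝ} {σ ν : ℝ} {u : ℝ → ℝ → ℝ} (h : IsBurgersSolution f σ ν u) {D : ℝ}
    (hD : burgersD u = D) (x : ℝ) : |burgW u 1 0 x| ≤ D := by
  have hu := burg_smooth_x h (le_refl (0:ℝ))
  have hcont : Continuous (burgW u 1 0) :=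
    hu.continuous_iteratedDeriv 1 (by exact_mod_cast le_top)
  have hle : sobLp 1 ⊤ (u 0) ≤ D := by rw [← hD]; exact le_max_right _ _
  obtain ⟨B, hB⟩ := (isCompact_Icc (a := (0:ℝ)) (b := 1)).exists_bound_of_continuousOn
    hcont.continuousOn
  have hfin : eLpNorm (burgW u 1 0) ⊤ (volume.restrict (Ioc (0:ℝ) 1)) < ⊤ := by
    rw [eLpNorm_exponent_top]
    refine eLpNormEssSup_lt_top_of_ae_bound (C := B) ?_
    rw [ae_restrict_iff' measurableSet_Ioc]
    exact Filter.Eventually.of_forall (fun y hy => hB y (Ioc_subset_Icc_self hy))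
  have hae : ∀ᵐ y ∂(volume.restrict (Ioc (0:ℝ) 1)), |burgW u 1 0 y| ≤ D := by
    have h1 := enorm_ae_le_eLpNormEssSup (burgW u 1 0) (volume.restrict (Ioc (0:ℝ) 1))
    filter_upwards [h1] with y hy
    rw [← eLpNorm_exponent_top] at hy
    have h2 := ENNReal.toReal_mono hfin.ne hy
    rw [toReal_enorm, Real.norm_eq_abs] at h2
    exact h2.trans hle
  by_contra hx
  push Not at hx
  set U : Set ℝ := {y | D < |burgW u 1 0 y|} with hU
  have hUo : IsOpen U := isOpen_lt continuous_const hcont.abs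
  have hxU : Int.fract x ∈ U := by
    have hp : Function.Periodic (burgW u 1 0) 1 := burgW_per h 1 0
    have h1 : burgW u 1 0 (Int.fract x) = burgW u 1 0 x := by
      have := hp.sub_int_mul_eq (x := x) ⌊x⌋
      rw [mul_one] at this
      exact this
    change D < |burgW u 1 0 (Int.fract x)|
    rw [h1]; exact hx
  have hcl : Int.fract x ∈ closure (Ioo (0:ℝ) 1) := by
    rw [closure_Ioo (by norm_num)]
    exact ⟨Int.fract_nonneg x, (Int.fract_lt_one x).le⟩
  have hne : (U ∩ Ioo (0:ℝ) 1).Nonempty := mem_closure_iff.mp hcl U hUo hxU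
  have hpos := (hUo.inter isOpen_Ioo).measure_pos volume hne
  rw [ae_restrict_iff' measurableSet_Ioc] at hae
  have hz : volume (U ∩ Ioo (0:ℝ) 1) = 0 := by
    refine measure_mono_null ?_ hae
    rintro y ⟨hy1, hy2⟩ hcon
    have h1 := hcon (Ioo_subset_Ioc_self hy2)
    have h2 : D < |burgW u 1 0 y| := hy1
    linarith
  rw [hz] at hpos
  exact lt_irrefl _ hpos

lemma burg_init0 {f : ℝ → ℝ} {σ ν : ℝ} {u : ℝ → ℝ → ℝ} (h : IsBurgersSolution f σ ν u) {D : ℝ}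
    (hD : burgersD u = D) (x : ℝ) : |u 0 x| ≤ D := by
  have hD0 : 0 ≤ D := (abs_nonneg _).trans (burg_init1 h hD 0)
  have hu := burg_smooth_x h (le_refl (0:ℝ))
  have hfr : u 0 (Int.fract x) = u 0 x := by
    have hp : Function.Periodic (u 0) 1 := h.hper 0
    have := hp.sub_int_mul_eq (x := x) ⌊x⌋
    rw [mul_one] at this
    exact this
  rw [← hfr]
  set y := Int.fract x
  have hy : y ∈ Icc (0:ℝ) 1 := ⟨Int.fract_nonneg x, (Int.fract_lt_one x).le⟩
  have hint : IntegrableOn (u 0) (Ioc (0:ℝ) 1) :=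
    (hu.continuous.integrableOn_Icc).mono_set Ioc_subset_Icc_self
  have e : ∫ z in Ioc (0:ℝ) 1, (u 0 y - u 0 z) = u 0 y := by
    rw [integral_sub (by simp) hint, h.hmean 0 le_rfl]
    simp
  rw [← e]
  have := norm_setIntegral_le_of_norm_le_const (μ := volume) (s := Ioc (0:ℝ) 1) (C := D)
    (f := fun z => u 0 y - u 0 z) (by simp) (fun z hz => by
      refine (burg_lip hu (burg_init1 h hD) y z).trans ?_
      have : |y - z| ≤ 1 := by rw [abs_le]; constructor <;> linarith [hy.1, hy.2, hz.1, hz.2]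
      calc D * |y - z| ≤ D * 1 := by gcongr
        _ = D := mul_one D)
  simpa using this

lemma burg_W0 (u : ℝ → ℝ → ℝ) : burgW u 0 = u := by
  funext t x; simp [burgW]

lemma burg_u_bound {f : ℝ → ℝ} {σ ν : ℝ} {u : ℝ → ℝ → ℝ} (h : IsBurgersSolution f σ ν u) {D : ℝ}
    (hD : burgersD u = D) (t : ℝ) (ht : 0 ≤ t) (x : ℝ) : |u t x| ≤ D := by
  have h0 := burg_init0 h hD
  have hc := burgW_cont0 h
  have hx := fun t (ht : 0 ≤ t) x => burgW_hasDeriv_x h 0 (t := t) ht x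
  have ht' := fun t (ht : 0 < t) x => burgW_hasDeriv_t h 0 (t := t) ht x
  rw [burg_W0] at hc hx ht'
  simp only [burgS_zero] at ht'
  rw [abs_le]
  constructor
  · have := burg_wmp (Ψ := fun t x => - u t x) (B := D) h.hν.le hc.neg
      (fun t x => by simp only [h.hper]) (fun x => by linarith [(abs_le.mp (h0 x)).1])
      (fun t ht => ⟨fun x => - burgW u 1 t x, fun x => - burgW u 2 t x, _,
        fun x => (hx t ht.le x).neg, fun x => (burgW_hasDeriv_x h 1 ht.le x).neg,
        fun x => (ht' t ht x).neg, fun x hz => by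
          have : burgW u 1 t x = 0 := by linarith
          simp only [zero_add, this]; linarith⟩) t ht x
    linarith
  · exact burg_wmp (Ψ := u) (B := D) h.hν.le hc
      h.hper (fun x => (abs_le.mp (h0 x)).2)
      (fun t ht => ⟨fun x => burgW u 1 t x, fun x => burgW u 2 t x, _,
        fun x => (hx t ht.le x), fun x => (burgW_hasDeriv_x h 1 ht.le x),
        fun x => (ht' t ht x), fun x hz => by
          have : burgW u 1 t x = 0 := hz
          simp only [zero_add, this]; linarith⟩) t ht x

lemma burg_ux_upper {f : ℝ → ℝ} {σ ν : ℝ} {u : ℝ → ℝ → ℝ} (h : IsBurgersSolution f σ ν u) {D : ℝ}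
    (hD : burgersD u = D) (t : ℝ) (ht : 0 ≤ t) (x : ℝ) : burgW u 1 t x ≤ D := by
  refine burg_wmp (Ψ := burgW u 1) (B := D) h.hν.le (burgW_cont1 h) (burgW_per h 1)
    (fun x => (abs_le.mp (burg_init1 h hD x)).2)
    (fun t ht => ⟨fun x => burgW u 2 t x, fun x => burgW u 3 t x, _,
        fun x => (burgW_hasDeriv_x h 1 ht.le x), fun x => (burgW_hasDeriv_x h 2 ht.le x),
        fun x => burgW_hasDeriv_t h 1 ht x, fun x hz => ?_⟩) t ht x
  have hz' : burgW u 2 t x = 0 := hz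
  have h1 := burgS_one f (u t) h.hf (burg_smooth_x h ht.le) x
  have h2 : 0 ≤ burgS f 1 (u t) x := by
    rw [h1]
    have := h.hconv (u t x)
    have := h.hσ
    have : 0 ≤ iteratedDeriv 2 f (u t x) := by linarith
    positivity
  simp only [Nat.reduceAdd, hz']
  linarith

lemma burg_flux {f : ℝ → ℝ} {σ ν : ℝ} {u : ℝ → ℝ → ℝ} (h : IsBurgersSolution f σ ν u)
    (t : ℝ) (ht : 0 < t) : ∃ qx qxx qt : ℝ → ℝ,
      (∀ x, HasDerivAt (fun x => ν * burgW u 1 t x - f (u t x)) (qx x) x) ∧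
      (∀ x, HasDerivAt qx (qxx x) x) ∧
      (∀ x, HasDerivAt (fun s => ν * burgW u 1 s x - f (u s x)) (qt x) t) ∧
      ∀ x, qx x = 0 → qt x = ν * qxx x := by
  have hx := fun x => burgW_hasDeriv_x h 0 (t := t) ht.le x
  have ht' := fun x => burgW_hasDeriv_t h 0 (t := t) ht x
  rw [burg_W0] at hx ht'
  simp only [burgS_zero] at ht'
  have hf' : ContDiff ℝ (⊤ : ℕ∞) (deriv f) := (contDiff_infty_iff_deriv.mp h.hf).2
  have hf1 : ∀ y, HasDerivAt f (deriv f y) y := fun y =>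
    ((h.hf.differentiable (by simp)) y).hasDerivAt
  have hf2 : ∀ y, HasDerivAt (deriv f) (iteratedDeriv 2 f y) y := fun y => by
    have := ((hf'.differentiable (by simp)) y).hasDerivAt
    simpa only [iteratedDeriv_succ, iteratedDeriv_zero] using this
  refine ⟨fun x => ν * burgW u 2 t x - deriv f (u t x) * burgW u 1 t x,
    fun x => ν * burgW u 3 t x - (iteratedDeriv 2 f (u t x) * burgW u 1 t x * burgW u 1 t x
      + deriv f (u t x) * burgW u 2 t x),
    fun x => ν * (ν * burgW u (1 + 2) t x - deriv f (u t x) * burgW u (1 + 1) t x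
      - burgS f 1 (u t) x) - deriv f (u t x) * (ν * burgW u (0 + 2) t x
      - deriv f (u t x) * burgW u (0 + 1) t x - 0), fun x => ?_, fun x => ?_, fun x => ?_, ?_⟩
  rotate_left 2
  · exact ((burgW_hasDeriv_t h 1 ht x).const_mul ν).sub
      (HasDerivAt.comp (h := fun s => u s x) t (hf1 (u t x)) (ht' x))
  rotate_left 1
  · exact ((burgW_hasDeriv_x h 1 ht.le x).const_mul ν).sub ((hf1 (u t x)).comp x (hx x))
  · exact ((burgW_hasDeriv_x h 2 ht.le x).const_mul ν).sub
      (((hf2 (u t x)).comp x (hx x)).mul (burgW_hasDeriv_x h 1 ht.le x))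
  · intro x hz
    have h1 := burgS_one f (u t) h.hf (burg_smooth_x h ht.le) x
    simp only [Nat.reduceAdd, zero_add, h1] at hz ⊢
    change _ = ν * (ν * burgW u 3 t x - (iteratedDeriv 2 f (u t x) * burgW u 1 t x * burgW u 1 t x
      + deriv f (u t x) * burgW u 2 t x))
    change ν * (_ - iteratedDeriv 2 f (u t x) * burgW u 1 t x ^ 2) - _ = _
    linear_combination (-deriv f (u t x)) * hz

lemma burg_ux_abs (f : ℝ → ℝ) (σ D : ℝ) : ∃ Q, 0 ≤ Q ∧ ∀ ν, 0 < ν → ν ≤ 1 →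
    ∀ u : ℝ → ℝ → ℝ, IsBurgersSolution f σ ν u → burgersD u = D →
    ∀ t, 0 < t → ∀ x, |burgW u 1 t x| ≤ Q / ν := by
  by_cases hfs : ContDiff ℝ (⊤ : ℕ∞) f
  swap
  · exact ⟨0, le_rfl, fun ν _ _ u h => absurd h.hf hfs⟩
  obtain ⟨B, hB⟩ := (isCompact_Icc (a := -D) (b := D)).exists_bound_of_continuousOn
    hfs.continuous.continuousOn
  refine ⟨|D| + 2 * |B|, by positivity, ?_⟩
  intro ν hν hν1 u h hD t ht x
  have hfb : ∀ t, 0 ≤ t → ∀ x, |f (u t x)| ≤ |B| := fun t ht x =>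
    (hB _ (abs_le.mp (burg_u_bound h hD t ht x))).trans (le_abs_self _)
  have hc : ContinuousOn (Function.uncurry (fun t x => ν * burgW u 1 t x - f (u t x)))
      (Ici (0:ℝ) ×ˢ univ) := by
    have h0 := burgW_cont0 h
    rw [burg_W0] at h0
    exact (continuousOn_const.mul (burgW_cont1 h)).sub (hfs.continuous.comp_continuousOn h0)
  have hper : ∀ t x, ν * burgW u 1 t (x + 1) - f (u t (x + 1)) = ν * burgW u 1 t x - f (u t x) := by
    intro t x
    rw [burgW_per h, h.hper]
  have hin : ∀ x, |ν * burgW u 1 0 x - f (u 0 x)| ≤ |D| + |B| := by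
    intro x
    refine (abs_sub _ _).trans (add_le_add ?_ (hfb 0 le_rfl x))
    rw [abs_mul, abs_of_pos hν]
    calc ν * |burgW u 1 0 x| ≤ 1 * |D| := by
          exact mul_le_mul hν1 ((burg_init1 h hD x).trans (le_abs_self _)) (abs_nonneg _) zero_le_one
      _ = |D| := one_mul _
  have hup := burg_wmp (Ψ := fun t x => ν * burgW u 1 t x - f (u t x)) (B := |D| + |B|) hν.le hc hper
    (fun x => (abs_le.mp (hin x)).2) (fun t ht => by
      obtain ⟨a, b, c, h1, h2, h3, h4⟩ := burg_flux h t ht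
      exact ⟨a, b, c, h1, h2, h3, fun x hx => (h4 x hx).le⟩) t ht.le x
  have hlo := burg_wmp (Ψ := fun t x => -(ν * burgW u 1 t x - f (u t x))) (B := |D| + |B|) hν.le
    hc.neg (fun t x => by rw [hper])
    (fun x => by linarith [(abs_le.mp (hin x)).1]) (fun t ht => by
      obtain ⟨a, b, c, h1, h2, h3, h4⟩ := burg_flux h t ht
      exact ⟨fun x => - a x, fun x => - b x, fun x => - c x, fun x => (h1 x).neg,
        fun x => (h2 x).neg, fun x => (h3 x).neg, fun x hx => by
          have := h4 x (by linarith)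
          change - c x ≤ ν * (- b x)
          rw [this]; linarith⟩) t ht.le x
  have hb := abs_le.mp (hfb t ht.le x)
  rw [le_div_iff₀ hν, ← abs_of_pos hν, ← abs_mul, abs_le]
  constructor <;> linarith [hb.1, hb.2]


/-- The algebra at the touching point. -/
lemma burg_alg (ν M b η Λ K C A a0 a1 a2 Sk Sl Y Z h hx q κ : ℝ)
    (hM : 1 ≤ M) (hν : 0 < ν) (hνM : 1 ≤ ν * M) (hb1 : 1 < b) (hb2 : b < 2) (hη0 : 0 ≤ η) (hη : η ≤ 1 / 2)
    (hC : 0 ≤ C) (hA : 1 ≤ A) (hΛ : Λ = (1 + 3 / 2 * C) / (2 * ((2 - b) / b)))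
    (hK : C / 2 + 2 * Λ * A * C * (A + 1) + Λ * A ^ 2 + 1 ≤ K)
    (hh : 0 < h) (hq : 0 < q) (hY : 0 ≤ Y) (hYq : Y ^ 2 = h ^ 2 * q) (hZ : 0 < Z)
    (hκ : κ = K * (1 + η) * Z ^ 2)
    (ha0 : M * |a0| ≤ A * Z * Y)
    (hSk : |Sk| ≤ C * (M * |a1| + M * Z * Y))
    (hSl : |Sl| ≤ C * (M * |a0| + Z * Y))
    (hz : η * a1 ^ 2 + Λ * M ^ 2 * a0 ^ 2 = κ * (h ^ 2 * q))
    (hzx : η * (2 * a1 * a2) + Λ * M ^ 2 * (2 * a0 * a1) = κ * (hx * b * (h * q))) :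
    M * a1 ^ 2 - 2 * ν * (η * a2 ^ 2 + Λ * M ^ 2 * a1 ^ 2) - 2 * η * a1 * Sk
      - 2 * Λ * M ^ 2 * a0 * Sl - K * M * Z ^ 2 * (h ^ 2 * q)
      + ν * κ * (b * (b - 1) * (hx ^ 2 * q)) < 0 := by
  have hb0 : 0 < b := by linarith
  have hM0 : 0 < M := by linarith
  have hδ : 0 < (2 - b) / b := div_pos (by linarith) hb0
  have hΛ0 : 0 < Λ := by rw [hΛ]; positivity
  have hK0 : 0 < K := by
    have : 0 ≤ 2 * Λ * A * C * (A + 1) := by positivity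
    have : 0 ≤ Λ * A ^ 2 := by positivity
    linarith
  have hκ0 : 0 < κ := by rw [hκ]; positivity
  set E := η * a2 ^ 2 + Λ * M ^ 2 * a1 ^ 2 with hE
  set P := h ^ 2 * q with hP
  have hP0 : 0 < P := by positivity

  have hcs : (κ * (hx * b * (h * q))) ^ 2 ≤ 4 * (κ * P) * E := by
    rw [← hzx, ← hz, hE]
    have : 0 ≤ η * (Λ * M ^ 2) * (a1 * a1 - a0 * a2) ^ 2 := by positivity
    nlinarith [this]
  have hcs2 : κ * q * b ^ 2 * hx ^ 2 ≤ 4 * E := by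
    have h1 : (κ * P) * (κ * q * b ^ 2 * hx ^ 2) ≤ (κ * P) * (4 * E) := by
      calc (κ * P) * (κ * q * b ^ 2 * hx ^ 2) = (κ * (hx * b * (h * q))) ^ 2 := by rw [hP]; ring
        _ ≤ 4 * (κ * P) * E := hcs
        _ = _ := by ring
    exact le_of_mul_le_mul_left h1 (by positivity)
  have hbad : ν * κ * (b * (b - 1) * (hx ^ 2 * q)) ≤ ν * ((b - 1) / b) * (4 * E) := by
    calc ν * κ * (b * (b - 1) * (hx ^ 2 * q))
        = ν * ((b - 1) / b) * (κ * q * b ^ 2 * hx ^ 2) := by field_simp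
      _ ≤ _ := mul_le_mul_of_nonneg_left hcs2
          (mul_nonneg hν.le (div_nonneg (by linarith) hb0.le))
  have hdiss : - (2 * ν * E) + ν * ((b - 1) / b) * (4 * E) = - (2 * ((2 - b) / b) * (ν * E)) := by
    field_simp; ring
  have hEl : Λ * M * a1 ^ 2 ≤ ν * E := by
    have h1 : 0 ≤ ν * (η * a2 ^ 2) := by positivity
    have h2 : Λ * M * a1 ^ 2 * 1 ≤ Λ * M * a1 ^ 2 * (ν * M) :=
      mul_le_mul_of_nonneg_left hνM (by positivity)
    have h3 : ν * E = ν * (η * a2 ^ 2) + Λ * M * a1 ^ 2 * (ν * M) := by rw [hE]; ring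
    linarith
  have hΛeq : 2 * ((2 - b) / b) * (Λ * M * a1 ^ 2) = (1 + 3 / 2 * C) * (M * a1 ^ 2) := by
    have h2b : 2 - b ≠ 0 := (by linarith : 0 < 2 - b).ne'
    rw [hΛ]; field_simp
  have hdis2 : (1 + 3 / 2 * C) * (M * a1 ^ 2) ≤ 2 * ((2 - b) / b) * (ν * E) := by
    rw [← hΛeq]
    exact mul_le_mul_of_nonneg_left hEl (by positivity)
  have hYP : Z ^ 2 * Y ^ 2 = Z ^ 2 * P := by rw [hYq]
  have hT1 : - (2 * η * a1 * Sk) ≤ 3 / 2 * C * (M * a1 ^ 2) + C / 2 * (M * Z ^ 2 * P) := by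
    have h1 : |2 * η * a1 * Sk| ≤ 1 * |a1| * (C * (M * |a1| + M * Z * Y)) := by
      rw [abs_mul, abs_mul, abs_of_nonneg (by positivity : (0:ℝ) ≤ 2 * η)]
      have : 2 * η ≤ 1 := by linarith
      gcongr
    have h2 : 1 * |a1| * (C * (M * |a1| + M * Z * Y)) ≤
        3 / 2 * C * (M * a1 ^ 2) + C / 2 * (M * Z ^ 2 * P) := by
      have h3 : 0 ≤ C * M * (|a1| - Z * Y) ^ 2 := by positivity
      have h4 : |a1| ^ 2 = a1 ^ 2 := sq_abs a1
      have h5 : 1 * |a1| * (C * (M * |a1| + M * Z * Y)) =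
          3 / 2 * C * (M * |a1| ^ 2) + C / 2 * (M * (Z ^ 2 * Y ^ 2))
          - 1 / 2 * (C * M * (|a1| - Z * Y) ^ 2) := by ring
      rw [h5, h4, hYP]
      have h6 : C / 2 * (M * (Z ^ 2 * P)) = C / 2 * (M * Z ^ 2 * P) := by ring
      linarith
    linarith [neg_abs_le (2 * η * a1 * Sk)]
  have hT2 : - (2 * Λ * M ^ 2 * a0 * Sl) ≤ 2 * Λ * A * C * (A + 1) * (M * Z ^ 2 * P) := by
    have hSl' : |Sl| ≤ C * ((A + 1) * (Z * Y)) := by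
      refine hSl.trans (mul_le_mul_of_nonneg_left ?_ hC)
      linarith
    have h1 : |2 * Λ * M ^ 2 * a0 * Sl| ≤ 2 * Λ * M * (A * Z * Y) * (C * ((A + 1) * (Z * Y))) := by
      calc |2 * Λ * M ^ 2 * a0 * Sl| = 2 * Λ * M * (M * |a0|) * |Sl| := by
            rw [abs_mul, abs_mul, abs_of_nonneg (by positivity : (0:ℝ) ≤ 2 * Λ * M ^ 2)]; ring
        _ ≤ _ := by gcongr
    have h2 : 2 * Λ * M * (A * Z * Y) * (C * ((A + 1) * (Z * Y))) =
        2 * Λ * A * C * (A + 1) * (M * Z ^ 2 * P) := by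
      calc 2 * Λ * M * (A * Z * Y) * (C * ((A + 1) * (Z * Y)))
          = 2 * Λ * A * C * (A + 1) * (M * (Z ^ 2 * Y ^ 2)) := by ring
        _ = _ := by rw [hYP]; ring
    linarith [neg_abs_le (2 * Λ * M ^ 2 * a0 * Sl)]
  have hKP : (C / 2 + 2 * Λ * A * C * (A + 1) + Λ * A ^ 2 + 1) * (M * Z ^ 2 * P)
      ≤ K * (M * Z ^ 2 * P) := mul_le_mul_of_nonneg_right hK (by positivity)
  have hpos : 0 < M * Z ^ 2 * P := by positivity
  have hpos2 : 0 ≤ Λ * A ^ 2 * (M * Z ^ 2 * P) := by positivity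
  have e1 : K * M * Z ^ 2 * P = K * (M * Z ^ 2 * P) := by ring
  have e2 : M * a1 ^ 2 - 2 * ν * E - 2 * η * a1 * Sk
      - 2 * Λ * M ^ 2 * a0 * Sl - K * M * Z ^ 2 * P
      + ν * κ * (b * (b - 1) * (hx ^ 2 * q)) = M * a1 ^ 2 + -(2 * ν * E) + -(2 * η * a1 * Sk)
      + -(2 * Λ * M ^ 2 * a0 * Sl) - K * M * Z ^ 2 * P
      + ν * κ * (b * (b - 1) * (hx ^ 2 * q)) := by ring
  rw [e2, e1]
  generalize M * Z ^ 2 * P = R at *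
  generalize ν * κ * (b * (b - 1) * (hx ^ 2 * q)) = r1 at *
  generalize -(2 * η * a1 * Sk) = r2 at *
  generalize -(2 * Λ * M ^ 2 * a0 * Sl) = r3 at *
  have e3 : (1 + 3 / 2 * C) * (M * a1 ^ 2) = M * a1 ^ 2 + 3 / 2 * C * (M * a1 ^ 2) := by ring
  have e4 : (C / 2 + 2 * Λ * A * C * (A + 1) + Λ * A ^ 2 + 1) * R = C / 2 * R
    + 2 * Λ * A * C * (A + 1) * R + Λ * A ^ 2 * R + R := by ring
  rw [e4] at hKP
  rw [e3] at hdis2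
  linarith

lemma burg_step (f : ℝ → ℝ) (hf : ContDiff ℝ (⊤ : ℕ∞) f) (D A b : ℝ) (hA : 1 ≤ A) (hb1 : 1 < b)
    (hb2 : b < 2) (n : ℕ) (hn : 1 ≤ n) :
    ∃ C, 1 ≤ C ∧ ∀ σ ν u, IsBurgersSolution f σ ν u → burgersD u = D →
      ∀ t0 t1 M, 0 < t0 → 1 ≤ M → 1 ≤ ν * M → t1 = t0 + 1 / (2 * M) →
      (∀ t ∈ Icc t0 t1, ∀ x, ((D + 1 - burgW u 1 t x) / M) ^ (b / 2) ≤ A) →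
      (∀ t ∈ Icc t0 t1, ∀ x, ∀ j, 1 ≤ j → j ≤ n →
        |burgW u j t x| ≤ A * M ^ j * ((D + 1 - burgW u 1 t x) / M) ^ (b / 2)) →
      ∀ x, |burgW u (n + 1) t1 x| ≤ C * M ^ (n + 1) * ((D + 1 - burgW u 1 t1 x) / M) ^ (b / 2) := by
  obtain ⟨Ca, hCa, hCa'⟩ := burg_S_bound f hf D A hA (n + 1) (by omega)
  obtain ⟨Cb, hCb, hCb'⟩ := burg_S_bound f hf D A hA n hn
  set C := Ca + Cb with hCdef
  have hC : 0 ≤ C := by positivity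
  have hb0 : 0 < b := by linarith
  have hδ : 0 < (2 - b) / b := div_pos (by linarith) hb0
  obtain ⟨Λ, hΛ⟩ : ∃ Λ, Λ = (1 + 3 / 2 * C) / (2 * ((2 - b) / b)) := ⟨_, rfl⟩
  have hΛ0 : 0 < Λ := by rw [hΛ]; positivity
  obtain ⟨K, hK⟩ : ∃ K, K = C / 2 + 2 * Λ * A * C * (A + 1) + Λ * A ^ 2 + 1 := ⟨_, rfl⟩
  have hK0 : 0 < K := by rw [hK]; positivity
  have hKΛ : Λ * A ^ 2 < K := by
    have : 0 ≤ 2 * Λ * A * C * (A + 1) := by positivity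
    rw [hK]; linarith
  refine ⟨3 * K + 1, by linarith, ?_⟩
  intro σ ν u h hD t0 t1 M ht0 hM hνM ht1 hYA hind x
  have hM0 : 0 < M := by linarith
  have ht01 : t0 ≤ t1 := by rw [ht1]; have : 0 < 1 / (2 * M) := by positivity
                            linarith
  have hpos : ∀ t, 0 < t → ∀ x, 0 < (D + 1 - burgW u 1 t x) / M := by
    intro t ht x
    have := burg_ux_upper h hD t ht.le x
    exact div_pos (by linarith) hM0
  set H : ℝ → ℝ → ℝ := fun t x => (D + 1 - burgW u 1 t x) / M with hH
  have hYsq : ∀ t, 0 < t → ∀ x, (H t x ^ (b / 2)) ^ 2 = H t x ^ b := by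
    intro t ht x
    rw [← Real.rpow_natCast, ← Real.rpow_mul (hpos t ht x).le]
    congr 1; push_cast; ring
  set Z := M ^ (n + 1) with hZ
  have hZ0 : 0 < Z := by positivity
  have key := burg_touch (fun t x => M * (t - t0) * burgW u (n + 1) t x ^ 2
    + Λ * M ^ 2 * burgW u n t x ^ 2 - K * (1 + M * (t - t0)) * Z ^ 2 * H t x ^ b) t0 t1
    ?_ ?_ ?_ ?_ t1 ⟨ht01, le_rfl⟩ x
  · -- conclusion
    have e1 : M * (t1 - t0) = 1 / 2 := by rw [ht1]; field_simp; ring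
    rw [e1] at key
    have ht1p : 0 < t1 := by linarith
    rw [← hYsq t1 ht1p x] at key
    set Y := H t1 x ^ (b / 2) with hY
    have hY0 : 0 ≤ Y := Real.rpow_nonneg (hpos t1 ht1p x).le _
    have h2 : 0 ≤ Λ * M ^ 2 * burgW u n t1 x ^ 2 := by positivity
    refine abs_le_of_sq_le_sq ?_ (by positivity)
    have h3 : burgW u (n + 1) t1 x ^ 2 ≤ 3 * K * (Z ^ 2 * Y ^ 2) := by nlinarith
    have h4 : 3 * K ≤ (3 * K + 1) ^ 2 := by nlinarith
    calc _ ≤ 3 * K * (Z ^ 2 * Y ^ 2) := h3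
      _ ≤ (3 * K + 1) ^ 2 * (Z ^ 2 * Y ^ 2) := by gcongr
      _ = _ := by ring
  · -- continuity
    have hsub : Icc t0 t1 ×ˢ (univ : Set ℝ) ⊆ Ioi (0:ℝ) ×ˢ univ :=
      prod_mono_left (fun s hs => lt_of_lt_of_le ht0 hs.1)
    have c1 := (burgW_cont h (n + 1)).mono hsub
    have c2 := (burgW_cont h n).mono hsub
    have c3 := (burgW_cont h 1).mono hsub
    have c4 : ContinuousOn (fun z : ℝ × ℝ => M * (z.1 - t0)) (Icc t0 t1 ×ˢ univ) := by fun_prop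
    have c5 : ContinuousOn (fun z : ℝ × ℝ => K * (1 + M * (z.1 - t0)) * Z ^ 2)
      (Icc t0 t1 ×ˢ univ) := by fun_prop
    have c6 : ContinuousOn (fun z : ℝ × ℝ => (H z.1 z.2) ^ b) (Icc t0 t1 ×ˢ univ) := by
      refine ContinuousOn.rpow_const ((continuousOn_const.sub c3).div_const M) ?_
      intro z hz
      exact Or.inl (hpos z.1 (lt_of_lt_of_le ht0 hz.1.1) z.2).ne'
    exact ((c4.mul (c1.pow 2)).add (continuousOn_const.mul (c2.pow 2))).sub (c5.mul c6)
  · intro t x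
    simp only [hH, burgW_per h]
  · intro x
    have h1 := hind t0 ⟨le_rfl, ht01⟩ x n hn le_rfl
    have hp := hpos t0 ht0 x
    simp only [sub_self, mul_zero, zero_mul, zero_add, add_zero, mul_one]
    rw [← hYsq t0 ht0 x]
    have hY0 : 0 < H t0 x ^ (b / 2) := Real.rpow_pos_of_pos hp _
    change |burgW u n t0 x| ≤ A * M ^ n * H t0 x ^ (b / 2) at h1
    set Y := H t0 x ^ (b / 2) with hY
    have h2 : burgW u n t0 x ^ 2 ≤ (A * M ^ n * Y) ^ 2 := by
      rw [← sq_abs]; gcongr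
    have h3 : Λ * M ^ 2 * burgW u n t0 x ^ 2 ≤ Λ * A ^ 2 * (Z ^ 2 * Y ^ 2) := by
      calc Λ * M ^ 2 * burgW u n t0 x ^ 2 ≤ Λ * M ^ 2 * (A * M ^ n * Y) ^ 2 := by gcongr
        _ = _ := by rw [hZ]; ring
    have h4 : Λ * A ^ 2 * (Z ^ 2 * Y ^ 2) < K * (Z ^ 2 * Y ^ 2) :=
      mul_lt_mul_of_pos_right hKΛ (by positivity)
    linarith
  · intro t ht x hz hle
    have htp : 0 < t := lt_trans ht0 ht.1
    have htI : t ∈ Icc t0 t1 := ⟨ht.1.le, ht.2⟩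
    have hHx : ∀ y, HasDerivAt (H t) (- burgW u 2 t y / M) y := fun y =>
      ((burgW_hasDeriv_x h 1 htp.le y).const_sub (D + 1)).div_const M
    have hPx : ∀ y, HasDerivAt (fun y => H t y ^ b) (- burgW u 2 t y / M * b * H t y ^ (b - 1)) y :=
      fun y => (hHx y).rpow_const (Or.inl (hpos t htp y).ne')
    have hPx2 : HasDerivAt (fun y => H t y ^ (b - 1))
        (- burgW u 2 t x / M * (b - 1) * H t x ^ (b - 1 - 1)) x :=
      (hHx x).rpow_const (Or.inl (hpos t htp x).ne')
    have hPxx : HasDerivAt (fun y => - burgW u 2 t y / M * b * H t y ^ (b - 1))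
        (- burgW u 3 t x / M * b * H t x ^ (b - 1) + - burgW u 2 t x / M * b *
          (- burgW u 2 t x / M * (b - 1) * H t x ^ (b - 1 - 1))) x :=
      ((((burgW_hasDeriv_x h 2 htp.le x).neg).div_const M).mul_const b).mul hPx2
    have hHt : HasDerivAt (fun s => H s x) (-(ν * burgW u (1 + 2) t x
        - deriv f (u t x) * burgW u (1 + 1) t x - burgS f 1 (u t) x) / M) t :=
      ((burgW_hasDeriv_t h 1 htp x).const_sub (D + 1)).div_const M
    have hPt : HasDerivAt (fun s => H s x ^ b) (-(ν * burgW u (1 + 2) t x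
        - deriv f (u t x) * burgW u (1 + 1) t x - burgS f 1 (u t) x) / M * b * H t x ^ (b - 1)) t :=
      hHt.rpow_const (Or.inl (hpos t htp x).ne')
    have hη1 : HasDerivAt (fun s : ℝ => M * (s - t0)) M t := by
      simpa using ((hasDerivAt_id t).sub_const t0).const_mul M
    have hκ1 : HasDerivAt (fun s : ℝ => K * (1 + M * (s - t0)) * Z ^ 2) (K * M * Z ^ 2) t :=
      ((hη1.const_add 1).const_mul K).mul_const _
    have hsq : ∀ k y, HasDerivAt (fun y => burgW u k t y ^ 2)
        (2 * burgW u k t y * burgW u (k + 1) t y) y := by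
      intro k y
      have := (burgW_hasDeriv_x h k htp.le y).fun_pow 2
      simpa using this
    have hsqt : ∀ k, HasDerivAt (fun s => burgW u k s x ^ 2) (2 * burgW u k t x *
        (ν * burgW u (k + 2) t x - deriv f (u t x) * burgW u (k + 1) t x - burgS f k (u t) x)) t := by
      intro k
      have := (burgW_hasDeriv_t h k htp x).fun_pow 2
      simpa using this
    have hsq2 : ∀ k, HasDerivAt (fun y => 2 * burgW u k t y * burgW u (k + 1) t y)
        (2 * burgW u (k + 1) t x * burgW u (k + 1) t x
          + 2 * burgW u k t x * burgW u (k + 2) t x) x := by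
      intro k
      exact ((burgW_hasDeriv_x h k htp.le x).const_mul 2).mul
        (burgW_hasDeriv_x h (k + 1) htp.le x)
    set η := M * (t - t0) with hη
    set κ := K * (1 + η) * Z ^ 2 with hκ
    have hφ : ∀ y, HasDerivAt (fun y => η * burgW u (n + 1) t y ^ 2
        + Λ * M ^ 2 * burgW u n t y ^ 2 - κ * H t y ^ b)
        (η * (2 * burgW u (n + 1) t y * burgW u (n + 1 + 1) t y)
          + Λ * M ^ 2 * (2 * burgW u n t y * burgW u (n + 1) t y)
          - κ * (- burgW u 2 t y / M * b * H t y ^ (b - 1))) y := fun y =>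
      (((hsq (n + 1) y).const_mul η).add ((hsq n y).const_mul (Λ * M ^ 2))).sub
        ((hPx y).const_mul κ)
    have hφ2 := (((hsq2 (n + 1)).const_mul η).add ((hsq2 n).const_mul (Λ * M ^ 2))).sub
        (hPxx.const_mul κ)
    have hm := burg_max_test _ _ _ x hφ hφ2 (fun y => by
      have := hle y
      rw [hz]; exact this)
    have hΦt := ((hη1.mul (hsqt (n + 1))).add ((hsqt n).const_mul (Λ * M ^ 2))).sub (hκ1.mul hPt)
    refine ⟨_, ?_, hΦt⟩
    obtain ⟨hm1, hm2⟩ := hm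
    have hhp := hpos t htp x
    change 0 < H t x at hhp
    have e1 : H t x ^ (b - 1) = H t x * H t x ^ (b - 1 - 1) := by
      rw [mul_comm, ← Real.rpow_add_one hhp.ne']; congr 1; ring
    have e2 : H t x ^ b = H t x ^ 2 * H t x ^ (b - 1 - 1) := by
      rw [pow_two, mul_assoc, ← e1, mul_comm, ← Real.rpow_add_one hhp.ne']; congr 1; ring
    have hq : 0 < H t x ^ (b - 1 - 1) := Real.rpow_pos_of_pos hhp _
    have hY0 : 0 ≤ H t x ^ (b / 2) := Real.rpow_nonneg hhp.le _
    have hYq := hYsq t htp x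
    have hYA' : H t x ^ (b / 2) ≤ A := hYA t htI x
    have hind' : ∀ j, 1 ≤ j → j ≤ n → |burgW u j t x| ≤ A * M ^ j * H t x ^ (b / 2) :=
      hind t htI x
    have hus := burg_smooth_x h htp.le
    have huD := burg_u_bound h hD t htp.le x
    have hSk := hCa' (u t) hus x M _ hM hY0 hYA' huD (by have := hind' 1 le_rfl hn; rwa [pow_one] at this)
      (fun j h1 h2 => hind' j h1 (by omega))
    have hSl := hCb' (u t) hus x M _ hM hY0 hYA' huD (by have := hind' 1 le_rfl hn; rwa [pow_one] at this)
      (fun j h1 h2 => hind' j h1 (by omega))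
    change |burgS f (n + 1) (u t) x| ≤ Ca * (M * |burgW u (n + 1) t x| + _) at hSk
    change |burgS f n (u t) x| ≤ Cb * (M * |burgW u n t x| + _) at hSl
    have ha0 := hind' n hn le_rfl
    have hS1 : 0 ≤ burgS f 1 (u t) x := by
      rw [burgS_one f (u t) h.hf hus x]
      have := h.hconv (u t x)
      have := h.hσ
      have : 0 ≤ iteratedDeriv 2 f (u t x) := by linarith
      positivity
    have hη0 : 0 ≤ η := mul_nonneg hM0.le (by linarith [ht.1])
    have hηh : η ≤ 1 / 2 := by
      have : t - t0 ≤ 1 / (2 * M) := by linarith [ht.2]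
      calc η ≤ M * (1 / (2 * M)) := by rw [hη]; gcongr
        _ = 1 / 2 := by field_simp
    have hκ0 : 0 < κ := by rw [hκ]; positivity
    rw [e2] at hYq
    rw [e2] at hz ⊢
    rw [e1] at hm1 hm2 ⊢
    generalize H t x = hh at *
    generalize hh ^ (b - 1 - 1) = q at *
    generalize hh ^ (b / 2) = Y at *
    simp only [Nat.reduceAdd] at *
    generalize burgS f 1 (u t) x = s1 at *
    generalize burgS f (n + 1) (u t) x = Sk at *
    generalize burgS f n (u t) x = Sl at *
    have hC1 : Ca ≤ C := by rw [hCdef]; linarith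
    have hC2 : Cb ≤ C := by rw [hCdef]; linarith
    have hν0 := h.hν
    have hSk2 : |Sk| ≤ C * (M * |burgW u (n + 1) t x| + M * Z * Y) := by
      refine hSk.trans ?_
      rw [show M ^ (n + 1 + 1) = M * Z by rw [hZ]; ring]
      exact mul_le_mul_of_nonneg_right hC1 (by positivity)
    have hSl2 : |Sl| ≤ C * (M * |burgW u n t x| + Z * Y) :=
      hSl.trans (mul_le_mul_of_nonneg_right hC2 (by positivity))
    have ha02 : M * |burgW u n t x| ≤ A * Z * Y := by
      calc M * |burgW u n t x| ≤ M * (A * M ^ n * Y) := mul_le_mul_of_nonneg_left ha0 hM0.le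
        _ = _ := by rw [hZ]; ring
    have alg := burg_alg ν M b η Λ K C A (burgW u n t x) (burgW u (n + 1) t x)
      (burgW u (n + 2) t x) Sk Sl Y Z hh (- burgW u 2 t x / M) q κ hM hν0 hνM hb1 hb2 hη0 hηh hC hA
      hΛ hK.ge hhp hq hY0 hYq hZ0 hκ ha02 hSk2 hSl2 (by linarith) (by linarith)
    have hs : 0 ≤ κ * (s1 / M * b * (hh * q)) := by positivity
    have hm2' := mul_nonpos_of_nonneg_of_nonpos hν0.le hm2
    have hm1' := congrArg (fun z => deriv f (u t x) * z) hm1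
    simp only [mul_zero] at hm1'
    linear_combination alg + hm2' - hm1' + hs


lemma burg_g (f : ℝ → ℝ) (σ D : ℝ) : ∃ G, 1 ≤ G ∧ ∀ ν, 0 < ν → ν ≤ 1 →
    ∀ u, IsBurgersSolution f σ ν u → burgersD u = D → ∀ t, 0 < t → ∀ x,
      1 ≤ D + 1 - burgW u 1 t x ∧ D + 1 - burgW u 1 t x ≤ G * max ν⁻¹ t⁻¹ ∧
      |burgW u 1 t x| ≤ G * (D + 1 - burgW u 1 t x) := by
  obtain ⟨Q, hQ, hQ'⟩ := burg_ux_abs f σ D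
  refine ⟨|D| + 1 + Q, by have := abs_nonneg D; linarith, ?_⟩
  intro ν hν hν1 u h hD t ht x
  have hD0 : 0 ≤ D := (abs_nonneg _).trans (burg_u_bound h hD t ht.le x)
  rw [abs_of_nonneg hD0]
  have h1 := burg_ux_upper h hD t ht.le x
  have h2 := hQ' ν hν hν1 u h hD t ht x
  have h3 : 1 ≤ ν⁻¹ := (one_le_inv₀ hν).2 hν1
  have h4 : ν⁻¹ ≤ max ν⁻¹ t⁻¹ := le_max_left _ _
  rw [div_eq_mul_inv] at h2
  refine ⟨by linarith, ?_, ?_⟩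
  · have h5 := neg_abs_le (burgW u 1 t x)
    calc D + 1 - burgW u 1 t x ≤ (D + 1) * 1 + Q * ν⁻¹ := by linarith
      _ ≤ (D + 1) * max ν⁻¹ t⁻¹ + Q * max ν⁻¹ t⁻¹ := by
          have : 1 ≤ max ν⁻¹ t⁻¹ := h3.trans h4
          gcongr
      _ = _ := by ring
  · set w := burgW u 1 t x
    have hq : 0 ≤ Q * (D + 1 - w) := mul_nonneg hQ (by linarith)
    have hd : 0 ≤ D * (D - w) := mul_nonneg hD0 (by linarith)
    rw [abs_le]
    constructor <;> nlinarith

lemma burg_main (f : ℝ → ℝ) (hf : ContDiff ℝ (⊤ : ℕ∞) f) (σ D b : ℝ) (hb1 : 1 < b) (hb2 : b < 2)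
    (n : ℕ) :
    ∃ C, 1 ≤ C ∧ ∀ ν, 0 < ν → ν ≤ 1 →
    ∀ u, IsBurgersSolution f σ ν u → burgersD u = D → ∀ t, 0 < t → ∀ x, ∀ j, 1 ≤ j → j ≤ n →
      |burgW u j t x| ≤ C * (max ν⁻¹ t⁻¹) ^ j *
        ((D + 1 - burgW u 1 t x) / max ν⁻¹ t⁻¹) ^ (b / 2) := by
  obtain ⟨G, hG, hG'⟩ := burg_g f σ D
  induction n with
  | zero => exact ⟨1, le_rfl, fun _ _ _ _ _ _ _ _ _ j h1 h2 => by omega⟩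
  | succ n ih =>
    obtain ⟨C, hC, hC'⟩ := ih
    rcases Nat.eq_zero_or_pos n with rfl | hn
    · refine ⟨G * G ^ (1 - b / 2), ?_, ?_⟩
      · have : 1 ≤ G ^ (1 - b / 2) := Real.one_le_rpow hG (by linarith)
        nlinarith
      · intro ν hν hν1 u h hD t ht x j h1 h2
        obtain rfl : j = 1 := by omega
        obtain ⟨g1, g2, g3⟩ := hG' ν hν hν1 u h hD t ht x
        have hM0 : 0 < max ν⁻¹ t⁻¹ := lt_max_of_lt_left (inv_pos.2 hν)
        generalize max ν⁻¹ t⁻¹ = M at *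
        generalize burgW u 1 t x = w at *
        have hy0 : 0 < (D + 1 - w) / M := div_pos (by linarith) hM0
        have hyG : (D + 1 - w) / M ≤ G := (div_le_iff₀ hM0).2 g2
        have e : D + 1 - w = M * ((D + 1 - w) / M) := by field_simp
        have e2 : (D + 1 - w) / M
            = ((D + 1 - w) / M) ^ (1 - b / 2) * ((D + 1 - w) / M) ^ (b / 2) := by
          rw [← Real.rpow_add hy0]; simp
        have e3 : ((D + 1 - w) / M) ^ (1 - b / 2) ≤ G ^ (1 - b / 2) :=
          Real.rpow_le_rpow hy0.le hyG (by linarith)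
        calc |w| ≤ G * (D + 1 - w) := g3
          _ = G * (M * (((D + 1 - w) / M) ^ (1 - b / 2) * ((D + 1 - w) / M) ^ (b / 2))) := by
            rw [← e2, ← e]
          _ ≤ G * (M * (G ^ (1 - b / 2) * ((D + 1 - w) / M) ^ (b / 2))) := by
            have : 0 ≤ ((D + 1 - w) / M) ^ (b / 2) := Real.rpow_nonneg hy0.le _
            gcongr
          _ = _ := by ring
    · have hA : 1 ≤ C * 2 ^ n + (2 * G) ^ (b / 2) := by
        have : (1:ℝ) ≤ 2 ^ n := one_le_pow₀ (by norm_num)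
        have : 0 ≤ (2 * G) ^ (b / 2) := by positivity
        nlinarith
      set A := C * 2 ^ n + (2 * G) ^ (b / 2) with hAdef
      obtain ⟨C2, hC2, hC2'⟩ := burg_step f hf D A b hA hb1 hb2 n hn
      refine ⟨C + C2, by linarith, ?_⟩
      intro ν hν hν1 u h hD t1 ht1 x j h1 h2
      have hM1 : 1 ≤ max ν⁻¹ t1⁻¹ := ((one_le_inv₀ hν).2 hν1).trans (le_max_left _ _)
      obtain ⟨g1, g2, g3⟩ := hG' ν hν hν1 u h hD t1 ht1 x
      obtain ⟨M, hMdef⟩ : ∃ M, M = max ν⁻¹ t1⁻¹ := ⟨_, rfl⟩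
      rw [← hMdef] at hM1 g2 ⊢
      have hM0 : 0 < M := by linarith
      have hY0 : 0 ≤ ((D + 1 - burgW u 1 t1 x) / M) ^ (b / 2) :=
        Real.rpow_nonneg (div_nonneg (by linarith) hM0.le) _
      rcases Nat.lt_or_ge n j with hj | hj
      · obtain rfl : j = n + 1 := by omega
        have hνM : 1 ≤ ν * M := by
          have : ν⁻¹ ≤ M := hMdef ▸ le_max_left _ _
          calc 1 = ν * ν⁻¹ := by field_simp
            _ ≤ _ := by gcongr
        have htM : 1 ≤ t1 * M := by
          have : t1⁻¹ ≤ M := hMdef ▸ le_max_right _ _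
          calc 1 = t1 * t1⁻¹ := by field_simp
            _ ≤ _ := by gcongr
        have hhalf : 1 / (2 * M) ≤ t1 / 2 := by
          rw [div_le_iff₀ (by positivity)]; linarith
        have hMs : ∀ s ∈ Icc (t1 - 1 / (2 * M)) t1, 0 < s ∧ M ≤ max ν⁻¹ s⁻¹ ∧ max ν⁻¹ s⁻¹ ≤ 2 * M := by
          intro s hs
          have hs0 : t1 / 2 ≤ s := by linarith [hs.1]
          have hsp : 0 < s := by linarith
          refine ⟨hsp, ?_, ?_⟩
          · rw [hMdef]
            exact max_le_max le_rfl (inv_anti₀ hsp hs.2)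
          · refine max_le ?_ ?_
            · have : ν⁻¹ ≤ M := hMdef ▸ le_max_left _ _
              linarith
            · rw [inv_le_iff_one_le_mul₀ hsp]
              nlinarith
        have := hC2' σ ν u h hD (t1 - 1 / (2 * M)) t1 M (by linarith) hM1 hνM (by ring)
          ?_ ?_ x
        · refine this.trans ?_
          have : C2 ≤ C + C2 := by linarith
          gcongr
        · intro s hs y
          obtain ⟨hs0, hs1, hs2⟩ := hMs s hs
          obtain ⟨g1, g2, g3⟩ := hG' ν hν hν1 u h hD s hs0 y
          have h3 : (D + 1 - burgW u 1 s y) / M ≤ 2 * G := by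
            rw [div_le_iff₀ hM0]
            refine g2.trans ?_
            calc G * max ν⁻¹ s⁻¹ ≤ G * (2 * M) := by gcongr
              _ = _ := by ring
          have h4 : 0 ≤ C * 2 ^ n := by positivity
          calc _ ≤ (2 * G) ^ (b / 2) :=
                Real.rpow_le_rpow (div_nonneg (by linarith) hM0.le) h3 (by linarith)
            _ ≤ A := by rw [hAdef]; linarith
        · intro s hs y i hi1 hi2
          obtain ⟨hs0, hs1, hs2⟩ := hMs s hs
          obtain ⟨g1, g2, g3⟩ := hG' ν hν hν1 u h hD s hs0 y
          have h3 := hC' ν hν hν1 u h hD s hs0 y i hi1 hi2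
          have h4 : 0 ≤ D + 1 - burgW u 1 s y := by linarith
          have hms : 0 < max ν⁻¹ s⁻¹ := by linarith
          have h5 : ((D + 1 - burgW u 1 s y) / max ν⁻¹ s⁻¹) ^ (b / 2)
              ≤ ((D + 1 - burgW u 1 s y) / M) ^ (b / 2) :=
            Real.rpow_le_rpow (div_nonneg h4 hms.le)
              (div_le_div_of_nonneg_left h4 hM0 hs1) (by linarith)
          have h6 : (max ν⁻¹ s⁻¹) ^ i ≤ 2 ^ n * M ^ i := by
            calc (max ν⁻¹ s⁻¹) ^ i ≤ (2 * M) ^ i := by gcongr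
              _ = 2 ^ i * M ^ i := by ring
              _ ≤ _ := by gcongr; norm_num
          have h7 : C * 2 ^ n ≤ A := by
            have : 0 ≤ (2 * G) ^ (b / 2) := by positivity
            rw [hAdef]; linarith
          have h8 : 0 ≤ ((D + 1 - burgW u 1 s y) / M) ^ (b / 2) :=
            Real.rpow_nonneg (div_nonneg h4 hM0.le) _
          have h9 : 0 ≤ ((D + 1 - burgW u 1 s y) / max ν⁻¹ s⁻¹) ^ (b / 2) :=
            Real.rpow_nonneg (div_nonneg h4 hms.le) _
          calc _ ≤ _ := h3
            _ ≤ C * (2 ^ n * M ^ i) * ((D + 1 - burgW u 1 s y) / M) ^ (b / 2) := by gcongr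
            _ = (C * 2 ^ n) * M ^ i * ((D + 1 - burgW u 1 s y) / M) ^ (b / 2) := by ring
            _ ≤ _ := by gcongr
      · have h3 := hC' ν hν hν1 u h hD t1 ht1 x j h1 hj
        rw [← hMdef] at h3
        refine h3.trans ?_
        have : C ≤ C + C2 := by linarith
        gcongr


lemma burg_Lp (w y : ℝ → ℝ) (hy : Continuous y) (G B c I : ℝ) (p : ℝ≥0∞)
    (hG : 1 ≤ G) (hB : 0 ≤ B) (hc0 : 0 ≤ c) (hc1 : c ≤ 1) (hp : 1 ≤ p)
    (hcp : p ≠ ⊤ → 1 ≤ c * p.toReal) (hy0 : ∀ x, 0 < y x) (hyG : ∀ x, y x ≤ G)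
    (hw : ∀ x, |w x| ≤ B * y x ^ c) (hI : ∫ x in Ioc (0:ℝ) 1, y x ≤ I) :
    (eLpNorm w p (volume.restrict (Ioc (0:ℝ) 1))).toReal ≤ B * G * I ^ (1 / p).toReal := by
  have hGc : G ^ c ≤ G := by
    calc G ^ c ≤ G ^ (1:ℝ) := Real.rpow_le_rpow_of_exponent_le hG hc1
      _ = G := Real.rpow_one G
  have hG0 : 0 < G := by linarith
  have hI0 : 0 ≤ I := (setIntegral_nonneg measurableSet_Ioc (fun x _ => (hy0 x).le)).trans hI
  by_cases hpt : p = ⊤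
  · subst hpt
    simp only [one_div, ENNReal.inv_top, ENNReal.toReal_zero, Real.rpow_zero, mul_one]
    refine ENNReal.toReal_le_of_le_ofReal (by positivity) ?_
    rw [eLpNorm_exponent_top]
    refine eLpNormEssSup_le_of_ae_bound (Filter.Eventually.of_forall fun x => ?_)
    rw [Real.norm_eq_abs]
    refine (hw x).trans ?_
    have : y x ^ c ≤ G := (Real.rpow_le_rpow (hy0 x).le (hyG x) hc0).trans hGc
    gcongr
  · have hr := hcp hpt
    have hp0 : p ≠ 0 := (zero_lt_one.trans_le hp).ne'
    have hr0 : 0 < p.toReal := ENNReal.toReal_pos hp0 hpt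
    have e : (1 / p).toReal = 1 / p.toReal := by simp
    rw [e]
    set r := p.toReal with hrdef
    refine ENNReal.toReal_le_of_le_ofReal (by positivity) ?_
    rw [eLpNorm_eq_lintegral_rpow_enorm_toReal hp0 hpt, ← hrdef]
    have hpt : ∀ x, ‖w x‖ₑ ^ r ≤ ENNReal.ofReal ((B * G) ^ r * y x) := by
      intro x
      rw [← ofReal_norm, ENNReal.ofReal_rpow_of_nonneg (norm_nonneg _) hr0.le]
      refine ENNReal.ofReal_le_ofReal ?_
      rw [Real.norm_eq_abs]
      have h1 : |w x| ^ r ≤ (B * y x ^ c) ^ r := Real.rpow_le_rpow (abs_nonneg _) (hw x) hr0.le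
      have h2 : (y x ^ c) ^ r ≤ G ^ r * y x := by
        rw [← Real.rpow_mul (hy0 x).le]
        have h3 : y x ^ (c * r) = y x ^ (c * r - 1) * y x := by
          rw [← Real.rpow_add_one (hy0 x).ne']; congr 1; ring
        rw [h3]
        refine mul_le_mul_of_nonneg_right ?_ (hy0 x).le
        calc y x ^ (c * r - 1) ≤ G ^ (c * r - 1) :=
              Real.rpow_le_rpow (hy0 x).le (hyG x) (by linarith)
          _ ≤ G ^ r := Real.rpow_le_rpow_of_exponent_le hG (by nlinarith)
      calc |w x| ^ r ≤ (B * y x ^ c) ^ r := h1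
        _ = B ^ r * (y x ^ c) ^ r := Real.mul_rpow hB (Real.rpow_nonneg (hy0 x).le _)
        _ ≤ B ^ r * (G ^ r * y x) := mul_le_mul_of_nonneg_left h2 (by positivity)
        _ = _ := by rw [Real.mul_rpow hB hG0.le]; ring
    have hint : IntegrableOn (fun x => (B * G) ^ r * y x) (Ioc (0:ℝ) 1) := by
      have : Continuous (fun x => (B * G) ^ r * y x) := by fun_prop
      exact (this.integrableOn_Icc).mono_set Ioc_subset_Icc_self
    have hle : ∫⁻ x in Ioc (0:ℝ) 1, ‖w x‖ₑ ^ r ≤ ENNReal.ofReal ((B * G) ^ r * I) := by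
      refine (lintegral_mono hpt).trans ?_
      rw [← ofReal_integral_eq_lintegral_ofReal hint
        (Filter.Eventually.of_forall fun x => mul_nonneg (by positivity) (hy0 x).le)]
      refine ENNReal.ofReal_le_ofReal ?_
      rw [integral_const_mul]
      gcongr
    refine (ENNReal.rpow_le_rpow hle (by positivity)).trans ?_
    rw [ENNReal.ofReal_rpow_of_nonneg (by positivity) (by positivity)]
    refine ENNReal.ofReal_le_ofReal ?_
    rw [Real.mul_rpow (by positivity) hI0, ← Real.rpow_mul (by positivity)]
    rw [mul_one_div_cancel hr0.ne', Real.rpow_one]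

lemma burg_int {f : ℝ → ℝ} {σ ν : ℝ} {u : ℝ → ℝ → ℝ} (h : IsBurgersSolution f σ ν u) (D M t : ℝ)
    (ht : 0 < t) : ∫ x in Ioc (0:ℝ) 1, (D + 1 - burgW u 1 t x) / M = (D + 1) / M := by
  have hc : Continuous (burgW u 1 t) :=
    continuous_iff_continuousAt.2 fun x => (burgW_hasDeriv_x h 1 ht.le x).continuousAt
  rw [integral_div]
  congr 1
  rw [← intervalIntegral.integral_of_le zero_le_one, intervalIntegral.integral_sub
    (by simp) (hc.intervalIntegrable _ _),
    intervalIntegral.integral_eq_sub_of_hasDerivAt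
      (fun x _ => burgW_hasDeriv_x h 0 ht.le x) (hc.intervalIntegrable _ _)]
  have := burgW_per h 0 t 0
  rw [zero_add] at this
  rw [this]; simp

lemma burg_final_bound {f : ℝ → ℝ} {σ D ν : ℝ} {u : ℝ → ℝ → ℝ} (hν : 0 < ν)
    (h : IsBurgersSolution f σ ν u)
    (hD : burgersD u = D) (m : ℕ) (hm : 1 ≤ m) (p : ℝ≥0∞) (hp : 1 ≤ p) (G C c : ℝ)
    (hG : 1 ≤ G) (hC : 1 ≤ C) (hc0 : 0 ≤ c) (hc1 : c ≤ 1) (hcp : p ≠ ⊤ → 1 ≤ c * p.toReal)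
    (t : ℝ) (ht : 0 < t)
    (hg : ∀ x, 1 ≤ D + 1 - burgW u 1 t x ∧ D + 1 - burgW u 1 t x ≤ G * max ν⁻¹ t⁻¹)
    (hw : ∀ x, |burgW u m t x| ≤ C * (max ν⁻¹ t⁻¹) ^ m *
        ((D + 1 - burgW u 1 t x) / max ν⁻¹ t⁻¹) ^ c) :
    sobLp m p (u t) ≤ (C * G * (|D| + 1)) *
      max (ν ^ (-(max 0 ((m : ℝ) - (1 / p).toReal)))) (t ^ (-(max 0 ((m : ℝ) - (1 / p).toReal)))) := by
  have hD0 : 0 ≤ D := (abs_nonneg _).trans (burg_u_bound h hD t ht.le 0)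
  rw [abs_of_nonneg hD0]
  have hq0 : 0 ≤ (1 / p).toReal := ENNReal.toReal_nonneg
  have hq1 : (1 / p).toReal ≤ 1 := by
    rw [one_div]
    exact ENNReal.toReal_le_of_le_ofReal zero_le_one (by simpa using hp)
  have hm' : (1:ℝ) ≤ m := by exact_mod_cast hm
  rw [max_eq_right (by linarith : 0 ≤ (m : ℝ) - (1 / p).toReal)]
  have hmax : (max ν⁻¹ t⁻¹) ^ ((m : ℝ) - (1 / p).toReal) ≤
      max (ν ^ (-((m : ℝ) - (1 / p).toReal))) (t ^ (-((m : ℝ) - (1 / p).toReal))) := by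
    rw [Real.rpow_neg hν.le, Real.rpow_neg ht.le, ← Real.inv_rpow hν.le, ← Real.inv_rpow ht.le]
    rcases le_total ν⁻¹ t⁻¹ with h1 | h1
    · rw [max_eq_right h1]; exact le_max_right _ _
    · rw [max_eq_left h1]; exact le_max_left _ _
  have hM0 : 0 < max ν⁻¹ t⁻¹ := lt_max_of_lt_left (inv_pos.2 hν)
  refine le_trans ?_ (mul_le_mul_of_nonneg_left hmax (by positivity))
  generalize max ν⁻¹ t⁻¹ = M at *
  have hc : Continuous (burgW u 1 t) :=
    continuous_iff_continuousAt.2 fun x => (burgW_hasDeriv_x h 1 ht.le x).continuousAt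
  have key := burg_Lp (burgW u m t) (fun x => (D + 1 - burgW u 1 t x) / M) (by fun_prop) G
    (C * M ^ m) c ((D + 1) / M) p hG (by positivity) hc0 hc1 hp hcp
    (fun x => div_pos (by linarith [(hg x).1]) hM0) (fun x => (div_le_iff₀ hM0).2 (hg x).2) hw
    (burg_int h D M t ht).le
  have h3 : ((D + 1) / M) ^ (1 / p).toReal ≤ (D + 1) * (M ^ (1 / p).toReal)⁻¹ := by
    rw [Real.div_rpow (by linarith) hM0.le, div_eq_mul_inv]
    gcongr
    calc (D + 1) ^ (1 / p).toReal ≤ (D + 1) ^ (1:ℝ) :=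
          Real.rpow_le_rpow_of_exponent_le (by linarith) hq1
      _ = _ := Real.rpow_one _
  refine key.trans ?_
  calc C * M ^ m * G * ((D + 1) / M) ^ (1 / p).toReal
      ≤ C * M ^ m * G * ((D + 1) * (M ^ (1 / p).toReal)⁻¹) := by gcongr
    _ = C * G * (D + 1) * (M ^ ((m : ℝ) - (1 / p).toReal)) := by
      rw [Real.rpow_sub hM0, Real.rpow_natCast]; ring


/-- For `m ∈ {0,1}` and `p ∈ [1,∞]`, or `m ≥ 2` and `p ∈ (1,∞]`,
with `γ = max(0, m - 1/p)`, there is a constant `C > 0` depending only on `f`,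
`D`, `m`, `p` such that for every `ν ∈ (0,1]` and every `t > 0`,
`|u(t)|_{m,p} ≤ C max(ν^{-γ}, t^{-γ})`. -/
theorem statement6 (f : ℝ → ℝ) (σ D : ℝ) (m : ℕ) (p : ℝ≥0∞)
    (hmp : (m ≤ 1 ∧ 1 ≤ p) ∨ (2 ≤ m ∧ 1 < p)) :
    ∃ C > 0, ∀ ν, 0 < ν → ν ≤ 1 →
      ∀ u : ℝ → ℝ → ℝ, IsBurgersSolution f σ ν u → burgersD u = D →
        ∀ t, 0 < t →
          sobLp m p (u t)
            ≤ C * max (ν ^ (-(max 0 ((m : ℝ) - (1 / p).toReal))))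
                (t ^ (-(max 0 ((m : ℝ) - (1 / p).toReal)))) := by
  by_cases hf : ContDiff ℝ (⊤ : ℕ∞) f
  swap
  · exact ⟨1, one_pos, fun ν _ _ u h => absurd h.hf hf⟩
  have hp : 1 ≤ p := by
    rcases hmp with h | h
    · exact h.2
    · exact h.2.le
  have hptop : p ≠ ⊤ → 1 ≤ p.toReal := fun h => by
    have := ENNReal.toReal_mono h hp
    simpa using this
  obtain ⟨G, hG, hG'⟩ := burg_g f σ D
  rcases Nat.eq_zero_or_pos m with rfl | hm
  · refine ⟨|D| + 1, by positivity, ?_⟩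
    intro ν hν hν1 u h hD t ht
    have hq0 : 0 ≤ (1 / p).toReal := ENNReal.toReal_nonneg
    have e : max 0 (((0:ℕ):ℝ) - (1 / p).toReal) = 0 := by
      apply max_eq_left; push_cast; linarith
    rw [e]
    have key := burg_Lp (burgW u 0 t) (fun _ => 1) continuous_const 1 |D| 1 1 p le_rfl
      (abs_nonneg D) zero_le_one le_rfl hp (fun h => by simpa using hptop h)
      (fun _ => one_pos) (fun _ => le_rfl) (fun x => by
        have := burg_u_bound h hD t ht.le x
        rw [burg_W0]
        simpa using this.trans (le_abs_self D)) (by simp)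
    refine le_trans key ?_
    simp
  · by_cases hm1 : m = 1
    · subst hm1
      refine ⟨G * G * (|D| + 1), by positivity, ?_⟩
      intro ν hν hν1 u h hD t ht
      refine burg_final_bound hν h hD 1 le_rfl p hp G G 1 hG hG zero_le_one le_rfl
        (fun h => by simpa using hptop h) t ht
        (fun x => ⟨(hG' ν hν hν1 u h hD t ht x).1, (hG' ν hν hν1 u h hD t ht x).2.1⟩) ?_
      intro x
      have hM0 : 0 < max ν⁻¹ t⁻¹ := lt_max_of_lt_left (inv_pos.2 hν)
      refine (hG' ν hν hν1 u h hD t ht x).2.2.trans (le_of_eq ?_)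
      rw [Real.rpow_one, pow_one]
      field_simp
    · have hp1 : 1 < p := by
        rcases hmp with h | h
        · omega
        · exact h.2
      obtain ⟨b, hb1, hb2, hbp⟩ : ∃ b : ℝ, 1 < b ∧ b < 2 ∧ (p ≠ ⊤ → 1 ≤ b / 2 * p.toReal) := by
        by_cases h : p = ⊤
        · exact ⟨3 / 2, by norm_num, by norm_num, fun h' => absurd h h'⟩
        · have hr : 1 < p.toReal := by
            have := (ENNReal.toReal_lt_toReal ENNReal.one_ne_top h).2 hp1
            simpa using this
          refine ⟨max (3 / 2) (2 / p.toReal), lt_max_of_lt_left (by norm_num),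
            max_lt (by norm_num) ?_, fun _ => ?_⟩
          · rw [div_lt_iff₀ (by linarith)]; linarith
          · have h1 : 2 / p.toReal ≤ max (3 / 2) (2 / p.toReal) := le_max_right _ _
            rw [div_le_iff₀ (by linarith)] at h1
            linarith
      obtain ⟨C, hC, hC'⟩ := burg_main f hf σ D b hb1 hb2 m
      refine ⟨C * G * (|D| + 1), by positivity, ?_⟩
      intro ν hν hν1 u h hD t ht
      exact burg_final_bound hν h hD m hm p hp G C (b / 2) hG hC (by linarith) (by linarith)
        hbp t ht
        (fun x => ⟨(hG' ν hν hν1 u h hD t ht x).1, (hG' ν hν hν1 u h hD t ht x).2.1⟩)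
        (fun x => hC' ν hν hν1 u h hD t ht x m hm le_rfl)
end

section
/- There is a constant c > 0 depending only on f and D such that for every ν ∈ (0,1], the time average over [T₁,T₂] satisfies { ‖u(t)‖₁² } ≥ c ν⁻¹. -/
open MeasureTheory Set
open scoped ENNReal

def upperO : Set (ℝ × ℝ) := {p | 0 < p.1}

lemma isOpen_upperO : IsOpen upperO := isOpen_lt continuous_const continuous_fst

/-- Directional derivative of a function on the plane. -/
noncomputable def ddir (e : ℝ × ℝ) (F : ℝ × ℝ → ℝ) : ℝ × ℝ → ℝ := fun p => fderiv ℝ F p e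

def SmoothO (F : ℝ × ℝ → ℝ) : Prop := ContDiffOn ℝ (⊤ : ℕ∞) F upperO

lemma SmoothO.at {F : ℝ × ℝ → ℝ} (h : SmoothO F) {p : ℝ × ℝ} (hp : 0 < p.1) :
    ContDiffAt ℝ (⊤ : ℕ∞) F p := h.contDiffAt (isOpen_upperO.mem_nhds hp)

lemma SmoothO.ddir {F : ℝ × ℝ → ℝ} (h : SmoothO F) (e : ℝ × ℝ) : SmoothO (ddir e F) := by
  have h1 : ContDiffOn ℝ (⊤ : ℕ∞) (fderiv ℝ F) upperO :=
    ContDiffOn.fderiv_of_isOpen h isOpen_upperO (by simp)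
  exact h1.clm_apply contDiffOn_const

lemma SmoothO.hasDerivAt_x {F : ℝ × ℝ → ℝ} (h : SmoothO F) {t : ℝ} (ht : 0 < t) (x : ℝ) :
    HasDerivAt (fun y => F (t, y)) (_root_.ddir (0, 1) F (t, x)) x := by
  have h1 : HasFDerivAt F (fderiv ℝ F (t, x)) (t, x) :=
    ((h.at (p := (t, x)) ht).differentiableAt (by simp)).hasFDerivAt
  have h2 : HasDerivAt (fun y : ℝ => (t, y)) ((0 : ℝ), (1 : ℝ)) x :=
    (hasDerivAt_const x t).prodMk (hasDerivAt_id x)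
  exact h1.comp_hasDerivAt x h2

lemma SmoothO.hasDerivAt_t {F : ℝ × ℝ → ℝ} (h : SmoothO F) {t : ℝ} (ht : 0 < t) (x : ℝ) :
    HasDerivAt (fun s => F (s, x)) (_root_.ddir (1, 0) F (t, x)) t := by
  have h1 : HasFDerivAt F (fderiv ℝ F (t, x)) (t, x) :=
    ((h.at (p := (t, x)) ht).differentiableAt (by simp)).hasFDerivAt
  have h2 : HasDerivAt (fun s : ℝ => (s, x)) ((1 : ℝ), (0 : ℝ)) t :=
    (hasDerivAt_id t).prodMk (hasDerivAt_const t x)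
  exact h1.comp_hasDerivAt t h2

lemma SmoothO.ddir_comm {F : ℝ × ℝ → ℝ} (h : SmoothO F) (e e' : ℝ × ℝ) {p : ℝ × ℝ}
    (hp : 0 < p.1) : _root_.ddir e (_root_.ddir e' F) p = _root_.ddir e' (_root_.ddir e F) p := by
  have h1 : ContDiffOn ℝ (⊤ : ℕ∞) (fderiv ℝ F) upperO :=
    ContDiffOn.fderiv_of_isOpen h isOpen_upperO (by simp)
  have h2 : DifferentiableAt ℝ (fderiv ℝ F) p :=
    (h1.contDiffAt (isOpen_upperO.mem_nhds hp)).differentiableAt (by simp)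
  have key : ∀ a b : ℝ × ℝ, _root_.ddir a (_root_.ddir b F) p = fderiv ℝ (fderiv ℝ F) p a b := by
    intro a b
    have h3 := h2.hasFDerivAt.clm_apply (hasFDerivAt_const b p)
    have h4 : HasFDerivAt (_root_.ddir b F) _ p := h3
    simp [_root_.ddir] at h4 ⊢
    rw [h4.fderiv]
    simp
  have hs : IsSymmSndFDerivAt ℝ F p := (h.at hp).isSymmSndFDerivAt (by
    simp only [minSmoothness_of_isRCLikeNormedField]; exact WithTop.coe_le_coe.2 le_top)
  rw [key, key]
  exact hs e e'

lemma SmoothO.continuousAt {F : ℝ × ℝ → ℝ} (h : SmoothO F) {p : ℝ × ℝ} (hp : 0 < p.1) :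
    ContinuousAt F p := (h.at hp).continuousAt

lemma SmoothO.continuous_x {F : ℝ × ℝ → ℝ} (h : SmoothO F) {t : ℝ} (ht : 0 < t) :
    Continuous (fun y => F (t, y)) :=
  continuous_iff_continuousAt.2 fun x => (h.hasDerivAt_x ht x).continuousAt

lemma SmoothO.continuous_max {F : ℝ × ℝ → ℝ} (h : SmoothO F) {a : ℝ} (ha : 0 < a) :
    Continuous (fun p : ℝ × ℝ => F (max p.1 a, p.2)) := by
  refine continuous_iff_continuousAt.2 fun p => ?_
  have : ContinuousAt F (max p.1 a, p.2) := h.continuousAt (lt_of_lt_of_le ha (le_max_right _ _))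
  exact ContinuousAt.comp (g := F) (f := fun p : ℝ × ℝ => (max p.1 a, p.2)) this
    (by fun_prop)

lemma second_deriv_nonpos {g : ℝ → ℝ} {g' : ℝ → ℝ} {x0 g'' : ℝ} (h1 : ∀ x, HasDerivAt g (g' x) x)
    (h2 : HasDerivAt g' g'' x0) (hmax : ∀ x, g x ≤ g x0) : g' x0 = 0 ∧ g'' ≤ 0 := by
  have hm : IsLocalMax g x0 := Filter.Eventually.of_forall hmax
  have e0 : g' x0 = 0 := hm.hasDerivAt_eq_zero (h1 x0)
  refine ⟨e0, ?_⟩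
  by_contra hc
  push Not at hc
  have ed : deriv g = g' := funext fun x => (h1 x).deriv
  have hmin : IsLocalMin g x0 := isLocalMin_of_deriv_deriv_pos (by rw [ed, h2.deriv]; exact hc)
    (by rw [ed, e0]) (h1 x0).continuousAt
  have hc' : g =ᶠ[nhds x0] fun _ => g x0 := by
    filter_upwards [hmin] with x hx
    exact le_antisymm (hmax x) hx
  have hd' : deriv g =ᶠ[nhds x0] deriv (fun _ => g x0) := hc'.deriv
  have := hd'.deriv_eq
  rw [ed, h2.deriv] at this
  simp at this
  linarith

lemma left_deriv_nonneg {g : ℝ → ℝ} {t0 g' a : ℝ} (ha : a < t0) (h : HasDerivAt g g' t0)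
    (hmax : ∀ t, a ≤ t → t ≤ t0 → g t ≤ g t0) : 0 ≤ g' := by
  have h1 := (hasDerivAt_iff_tendsto_slope_left_right.1 h).1
  refine ge_of_tendsto h1 ?_
  filter_upwards [Ioo_mem_nhdsLT ha] with t ht
  rw [slope_def_field]
  apply div_nonneg_of_nonpos
  · linarith [hmax t ht.1.le ht.2.le]
  · linarith [ht.2]

section
variable {f : ℝ → ℝ} {σ ν : ℝ} {u : ℝ → ℝ → ℝ}

lemma IsBurgersSolution.smooth (h : IsBurgersSolution f σ ν u) :
    SmoothO (Function.uncurry u) := by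
  refine h.hu.mono ?_
  rintro ⟨t, x⟩ hp
  have hp' : 0 < t := hp
  exact ⟨hp'.le, mem_univ _⟩

lemma IsBurgersSolution.deriv_eq (h : IsBurgersSolution f σ ν u) {t : ℝ} (ht : 0 < t) :
    deriv (u t) = fun x => ddir (0, 1) (Function.uncurry u) (t, x) :=
  funext fun x => (h.smooth.hasDerivAt_x ht x).deriv

lemma IsBurgersSolution.pde (h : IsBurgersSolution f σ ν u) {t : ℝ} (ht : 0 < t) (x : ℝ) :
    ddir (1, 0) (Function.uncurry u) (t, x)
      + deriv f (u t x) * ddir (0, 1) (Function.uncurry u) (t, x)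
      - ν * ddir (0, 1) (ddir (0, 1) (Function.uncurry u)) (t, x) = 0 := by
  have h1 := h.hpde t ht x
  rw [h.deriv_eq ht, ((h.smooth.ddir (0, 1)).hasDerivAt_x ht x).deriv] at h1
  have h2 := (h.smooth.hasDerivAt_t ht x).deriv
  simp only [Function.uncurry_apply_pair] at h2
  rw [h2] at h1
  exact h1

lemma IsBurgersSolution.hasDerivAt_f (h : IsBurgersSolution f σ ν u) (y : ℝ) :
    HasDerivAt f (deriv f y) y :=
  (h.hf.differentiable (by simp) y).hasDerivAt

lemma IsBurgersSolution.hasDerivAt_f' (h : IsBurgersSolution f σ ν u) (y : ℝ) :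
    HasDerivAt (deriv f) (iteratedDeriv 2 f y) y := by
  have h1 : Differentiable ℝ (deriv f) := by
    have := h.hf.differentiable_iteratedDeriv 1 (by norm_cast)
    rwa [iteratedDeriv_one] at this
  rw [iteratedDeriv_succ, iteratedDeriv_one]
  exact (h1 y).hasDerivAt

/-- Equation for the space derivative. -/
lemma IsBurgersSolution.pde_x (h : IsBurgersSolution f σ ν u) {t : ℝ} (ht : 0 < t) (x : ℝ) :
    ddir (1, 0) (ddir (0, 1) (Function.uncurry u)) (t, x)
      + iteratedDeriv 2 f (u t x) * ddir (0, 1) (Function.uncurry u) (t, x) ^ 2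
      + deriv f (u t x) * ddir (0, 1) (ddir (0, 1) (Function.uncurry u)) (t, x)
      - ν * ddir (0, 1) (ddir (0, 1) (ddir (0, 1) (Function.uncurry u))) (t, x) = 0 := by
  have hs := h.smooth
  have hu : HasDerivAt (u t) _ x := hs.hasDerivAt_x ht x
  have h1 := (hs.ddir (1, 0)).hasDerivAt_x ht x
  have h2 := (hs.ddir (0, 1)).hasDerivAt_x ht x
  have h3 := ((hs.ddir (0, 1)).ddir (0, 1)).hasDerivAt_x ht x
  have h4 := (h.hasDerivAt_f' (u t x)).comp x hu
  have h5 := (h1.add (h4.mul h2)).sub (h3.const_mul ν)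
  have h6 := h5.congr_of_eventuallyEq (f₁ := fun _ : ℝ => (0 : ℝ))
    (Filter.Eventually.of_forall fun y => (h.pde ht y).symm)
  have h7 := h6.unique (hasDerivAt_const x 0)
  rw [hs.ddir_comm (1, 0) (0, 1) (p := (t, x)) ht]
  simp only [Function.comp] at h7
  linarith

lemma IsBurgersSolution.ux_per (h : IsBurgersSolution f σ ν u) {t : ℝ} (ht : 0 < t) :
    Function.Periodic (fun x => ddir (0, 1) (Function.uncurry u) (t, x)) 1 := by
  intro x
  rw [← h.deriv_eq ht]
  have : u t = fun x => u t (x + 1) := funext fun x => (h.hper t x).symm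
  conv_rhs => rw [this]
  rw [deriv_comp_add_const]

/-- Oleinik type estimate, shifted version. -/
lemma IsBurgersSolution.oleinik_shift (h : IsBurgersSolution f σ ν u) {ε T : ℝ} (hε : 0 < ε)
    (hT : ε < T) (x : ℝ) :
    σ * ((T - ε) * ddir (0, 1) (Function.uncurry u) (T, x)) ≤ 1 := by
  set v := ddir (0, 1) (Function.uncurry u) with hv
  have hs := h.smooth
  have hvs : SmoothO v := hs.ddir (0, 1)
  have hK : IsCompact (Icc ε T ×ˢ Icc (0:ℝ) 1) := isCompact_Icc.prod isCompact_Icc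
  have hc : ContinuousOn (fun p : ℝ × ℝ => (p.1 - ε) * v p) (Icc ε T ×ˢ Icc (0:ℝ) 1) := by
    intro p hp
    have : ContinuousAt v p := hvs.continuousAt (lt_of_lt_of_le hε hp.1.1)
    exact ContinuousAt.continuousWithinAt (by fun_prop)
  obtain ⟨⟨t0, x0⟩, hp0, hmax0⟩ := hK.exists_isMaxOn ⟨(ε, 0), by simp [hT.le]⟩ hc
  have hmax : ∀ t y, ε ≤ t → t ≤ T → (t - ε) * v (t, y) ≤ (t0 - ε) * v (t0, x0) := by
    intro t y h1 h2
    have hper := h.ux_per (lt_of_lt_of_le hε h1)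
    obtain ⟨z, hz, hz'⟩ := hper.exists_mem_Ico₀ one_pos y
    have hz'' : v (t, y) = v (t, z) := hz'
    rw [hz'']
    exact hmax0 (show (t, z) ∈ _ from ⟨⟨h1, h2⟩, ⟨hz.1, hz.2.le⟩⟩)
  have hσ := h.hσ
  have hx := hmax T x hT.le le_rfl
  suffices σ * ((t0 - ε) * v (t0, x0)) ≤ 1 from
    le_trans (mul_le_mul_of_nonneg_left hx hσ.le) this
  rcases le_or_gt ((t0 - ε) * v (t0, x0)) 0 with hneg | hpos
  · nlinarith
  have ht0 : ε < t0 := by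
    refine lt_of_le_of_ne hp0.1.1 ?_
    rintro rfl
    simp at hpos
  have htp : 0 < t0 := hε.trans ht0
  have hvpos : 0 < v (t0, x0) := pos_of_mul_pos_right hpos (by linarith)
  have hxmax : ∀ y, v (t0, y) ≤ v (t0, x0) := fun y =>
    le_of_mul_le_mul_left (hmax t0 y ht0.le hp0.1.2) (by linarith)
  obtain ⟨e1, e2⟩ := second_deriv_nonpos (g := fun y => v (t0, y))
    (fun y => hvs.hasDerivAt_x htp y) ((hvs.ddir (0, 1)).hasDerivAt_x htp x0) hxmax
  have e3 := left_deriv_nonneg (g := fun t => (t - ε) * v (t, x0)) ht0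
    (((hasDerivAt_id t0).sub_const ε).mul (hvs.hasDerivAt_t htp x0))
    (fun t h1 h2 => hmax t x0 h1 (h2.trans hp0.1.2))
  have e4 := h.pde_x htp x0
  rw [← hv, e1] at e4
  have e5 := h.hconv (u t0 x0)
  simp only [id] at e3
  have hν := h.hν
  have e6 : ddir (1, 0) v (t0, x0) ≤ - (σ * v (t0, x0) ^ 2) := by
    have : ν * ddir (0, 1) (ddir (0, 1) v) (t0, x0) ≤ 0 := mul_nonpos_of_nonneg_of_nonpos hν.le e2
    nlinarith [mul_le_mul_of_nonneg_right e5 (sq_nonneg (v (t0, x0)))]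
  have e7 : (t0 - ε) * ddir (1, 0) v (t0, x0) ≤ (t0 - ε) * (- (σ * v (t0, x0) ^ 2)) :=
    mul_le_mul_of_nonneg_left e6 (by linarith)
  have e8 : v (t0, x0) * (σ * ((t0 - ε) * v (t0, x0))) ≤ v (t0, x0) * 1 := by nlinarith
  exact le_of_mul_le_mul_left e8 hvpos

lemma IsBurgersSolution.oleinik (h : IsBurgersSolution f σ ν u) {T : ℝ}
    (hT : 0 < T) (x : ℝ) :
    σ * (T * ddir (0, 1) (Function.uncurry u) (T, x)) ≤ 1 := by
  have ht : Filter.Tendsto (fun ε : ℝ => σ * ((T - ε) * ddir (0, 1) (Function.uncurry u) (T, x)))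
      (nhdsWithin 0 (Ioi 0)) (nhds (σ * ((T - 0) * ddir (0, 1) (Function.uncurry u) (T, x)))) := by
    apply Filter.Tendsto.mono_left _ nhdsWithin_le_nhds
    apply Continuous.tendsto
    fun_prop
  rw [sub_zero] at ht
  refine le_of_tendsto ht ?_
  filter_upwards [Ioo_mem_nhdsGT hT] with ε hε
  exact h.oleinik_shift hε.1 hε.2 x

end

lemma sobLp_one_two {v : ℝ → ℝ} (hc : Continuous (deriv v)) :
    sobLp 1 2 v ^ 2 = ∫ x in (0:ℝ)..1, deriv v x ^ 2 := by
  have hm : MemLp (deriv v) 2 (volume.restrict (Ioc (0:ℝ) 1)) := by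
    rw [memLp_two_iff_integrable_sq hc.aestronglyMeasurable]
    have : Continuous (fun x => deriv v x ^ 2) := by fun_prop
    exact (this.integrableOn_Icc (a := 0) (b := 1)).mono_set Ioc_subset_Icc_self
  rw [sobLp, iteratedDeriv_one, hm.eLpNorm_eq_integral_rpow_norm (by simp) (by simp),
    intervalIntegral.integral_of_le zero_le_one]
  have h0 : 0 ≤ ∫ x in Ioc (0:ℝ) 1, deriv v x ^ 2 := integral_nonneg fun x => sq_nonneg _
  have e : ∀ x, ‖deriv v x‖ ^ (2 : ℝ≥0∞).toReal = deriv v x ^ 2 := by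
    intro x
    simp
  simp only [e]
  rw [ENNReal.toReal_ofReal (by positivity), ENNReal.toReal_ofNat]
  rw [show (2:ℝ)⁻¹ = 1 / 2 by norm_num, ← Real.sqrt_eq_rpow]
  exact Real.sq_sqrt h0

lemma sobLp_zero_one {v : ℝ → ℝ} (hc : Continuous v) :
    sobLp 0 1 v = ∫ x in (0:ℝ)..1, |v x| := by
  rw [sobLp, iteratedDeriv_zero, eLpNorm_one_eq_lintegral_enorm,
    ← integral_norm_eq_lintegral_enorm hc.aestronglyMeasurable,
    intervalIntegral.integral_of_le zero_le_one]
  rfl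

lemma sq_integral_abs_le {v : ℝ → ℝ} (hc : Continuous v) :
    (∫ x in (0:ℝ)..1, |v x|) ^ 2 ≤ ∫ x in (0:ℝ)..1, v x ^ 2 := by
  set m := ∫ x in (0:ℝ)..1, |v x| with hm
  have h1 : 0 ≤ ∫ x in (0:ℝ)..1, (v x ^ 2 - 2 * m * |v x| + m ^ 2) := by
    apply intervalIntegral.integral_nonneg zero_le_one
    intro x _
    nlinarith [sq_nonneg (|v x| - m), sq_abs (v x)]
  have i1 : IntervalIntegrable (fun x => v x ^ 2) volume 0 1 :=
    Continuous.intervalIntegrable (by fun_prop) _ _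
  have i2 : IntervalIntegrable (fun x => 2 * m * |v x|) volume 0 1 :=
    Continuous.intervalIntegrable (by fun_prop) _ _
  rw [intervalIntegral.integral_add (i1.sub i2) (by simp), intervalIntegral.integral_sub i1 i2,
    intervalIntegral.integral_const_mul, ← hm] at h1
  simp at h1
  nlinarith

lemma integral_abs_pos {v : ℝ → ℝ} (hc : Continuous v) (hper : Function.Periodic v 1)
    (hne : ∃ x, v x ≠ 0) : 0 < ∫ x in (0:ℝ)..1, |v x| := by
  obtain ⟨x, hx⟩ := hne
  obtain ⟨z, hz, hz'⟩ := hper.exists_mem_Ico₀ one_pos x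
  refine intervalIntegral.integral_pos zero_lt_one (by fun_prop) (fun _ _ => abs_nonneg _)
    ⟨z, ⟨hz.1, hz.2.le⟩, ?_⟩
  rw [← hz']
  exact abs_pos.2 hx

/-- A periodic zero-mean function with derivative at most `K` is at most `K` in modulus. -/
lemma abs_le_of_deriv_le {v v' : ℝ → ℝ} {K : ℝ} (hd : ∀ x, HasDerivAt v (v' x) x)
    (hK : ∀ x, v' x ≤ K) (hper : Function.Periodic v 1) (hmean : ∫ x in (0:ℝ)..1, v x = 0)
    (x : ℝ) : |v x| ≤ K := by
  have hc : Continuous v := continuous_iff_continuousAt.2 fun x => (hd x).continuousAt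
  have hz : ∃ z, v z = 0 := by
    obtain ⟨z, _, hz⟩ := exists_hasDerivAt_eq_slope (fun y => ∫ x in (0:ℝ)..y, v x) v zero_lt_one
      (intervalIntegral.differentiable_integral_of_continuous hc).continuous.continuousOn
      (fun y _ => intervalIntegral.integral_hasDerivAt_right (hc.intervalIntegrable _ _)
        (hc.stronglyMeasurableAtFilter _ _) hc.continuousAt)
    exact ⟨z, by rw [hz, hmean]; simp⟩
  obtain ⟨z, hz⟩ := hz
  have hmv : ∀ a b, a ≤ b → v b - v a ≤ K * (b - a) := fun a b hab =>
    image_sub_le_mul_sub_of_deriv_le (fun x => (hd x).differentiableAt)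
      (fun x => by rw [(hd x).deriv]; exact hK x) hab
  have hK0 : 0 ≤ K := by
    have h0 := hmv 0 1 zero_le_one
    have h1 := hper 0
    simp only [zero_add] at h1
    rw [h1] at h0
    linarith
  obtain ⟨y, hy, hy'⟩ := hper.exists_mem_Ico one_pos x z
  rw [hy', abs_le]
  have h1 := hmv z y hy.1
  have h2 := hmv y (z + 1) hy.2.le
  rw [hper z, hz] at h2
  rw [hz] at h1
  have := hy.1
  have := hy.2
  constructor <;> nlinarith

noncomputable def energy (u : ℝ → ℝ → ℝ) (t : ℝ) : ℝ := ∫ x in (0:ℝ)..1, u t x ^ 2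

section
variable {f : ℝ → ℝ} {σ ν : ℝ} {u : ℝ → ℝ → ℝ}

lemma IsBurgersSolution.continuous_max (h : IsBurgersSolution f σ ν u) :
    Continuous (fun p : ℝ × ℝ => u (max p.1 0) p.2) := by
  have h1 : ContinuousOn (Function.uncurry u) (Ici (0:ℝ) ×ˢ univ) := h.hu.continuousOn
  exact h1.comp_continuous (f := fun p : ℝ × ℝ => (max p.1 0, p.2)) (by fun_prop)
    (fun p => ⟨le_max_right p.1 0, mem_univ _⟩)

lemma IsBurgersSolution.continuous_init (h : IsBurgersSolution f σ ν u) :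
    Continuous (u 0) := by
  have := h.continuous_max.comp (f := fun x : ℝ => ((0:ℝ), x)) (by fun_prop)
  simpa [Function.comp_def] using this

lemma IsBurgersSolution.energy_continuous (h : IsBurgersSolution f σ ν u) :
    Continuous (fun t => energy u (max t 0)) := by
  unfold energy
  apply intervalIntegral.continuous_parametric_intervalIntegral_of_continuous'
  have := h.continuous_max
  exact this.pow 2

lemma IsBurgersSolution.energy_rate (h : IsBurgersSolution f σ ν u) {t : ℝ} (ht : 0 < t) :
    ∫ x in (0:ℝ)..1, 2 * u t x * ddir (1, 0) (Function.uncurry u) (t, x)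
      = - 2 * ν * ∫ x in (0:ℝ)..1, ddir (0, 1) (Function.uncurry u) (t, x) ^ 2 := by
  have hs := h.smooth
  set v := ddir (0, 1) (Function.uncurry u) with hv
  have hvs : SmoothO v := hs.ddir (0, 1)
  have hfc : Continuous f := h.hf.continuous
  have hG : ∀ y, HasDerivAt (fun y => y * f y - ∫ s in (0:ℝ)..y, f s) (y * deriv f y) y := by
    intro y
    have h1 := ((hasDerivAt_id y).mul (h.hasDerivAt_f y)).sub
      (intervalIntegral.integral_hasDerivAt_right (hfc.intervalIntegrable 0 y)
        (hfc.stronglyMeasurableAtFilter _ _) hfc.continuousAt)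
    refine h1.congr_deriv ?_
    simp only [id]
    ring
  have hu : ∀ x, HasDerivAt (u t) (v (t, x)) x := fun x => hs.hasDerivAt_x ht x
  have cu : Continuous (u t) := hs.continuous_x ht
  have cv : Continuous (fun x => v (t, x)) := hvs.continuous_x ht
  have ct : Continuous (fun x => ddir (1, 0) (Function.uncurry u) (t, x)) :=
    (hs.ddir (1, 0)).continuous_x ht
  have c1 : Continuous (fun x => 2 * u t x * ddir (1, 0) (Function.uncurry u) (t, x)) :=
    (continuous_const.mul cu).mul ct
  have c2 : Continuous (fun x => 2 * ν * v (t, x) ^ 2) := continuous_const.mul (cv.pow 2)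
  set H : ℝ → ℝ := fun x => 2 * ν * (u t x * v (t, x))
    - 2 * (u t x * f (u t x) - ∫ s in (0:ℝ)..(u t x), f s) with hH
  have hHd : ∀ x, HasDerivAt H (2 * u t x * ddir (1, 0) (Function.uncurry u) (t, x)
      + 2 * ν * v (t, x) ^ 2) x := by
    intro x
    have h1 := (((hu x).mul (hvs.hasDerivAt_x ht x)).const_mul (2 * ν)).sub
      (((hG (u t x)).comp x (hu x)).const_mul 2)
    have h2 := h.pde ht x
    rw [← hv] at h2
    refine h1.congr_deriv ?_
    have : ddir (1, 0) (Function.uncurry u) (t, x) = - deriv f (u t x) * v (t, x)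
      + ν * ddir (0, 1) v (t, x) := by linarith
    rw [this]
    ring
  have h3 : ∫ x in (0:ℝ)..1, (2 * u t x * ddir (1, 0) (Function.uncurry u) (t, x)
      + 2 * ν * v (t, x) ^ 2) = H 1 - H 0 :=
    intervalIntegral.integral_eq_sub_of_hasDerivAt (fun x _ => hHd x)
      (Continuous.intervalIntegrable (c1.add c2) _ _)
  have e1 : u t 1 = u t 0 := by simpa using h.hper t 0
  have e2 : v (t, 1) = v (t, 0) := by simpa using h.ux_per ht 0
  have e3 : H 1 = H 0 := by simp only [hH, e1, e2]
  rw [e3, sub_self, intervalIntegral.integral_add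
    (Continuous.intervalIntegrable c1 _ _) (Continuous.intervalIntegrable c2 _ _),
    intervalIntegral.integral_const_mul] at h3
  linarith

lemma IsBurgersSolution.energy_eq (h : IsBurgersSolution f σ ν u) {a b : ℝ} (ha : 0 < a)
    (hab : a ≤ b) :
    energy u b - energy u a = - 2 * ν *
      ∫ t in a..b, ∫ x in (0:ℝ)..1, ddir (0, 1) (Function.uncurry u) (t, x) ^ 2 := by
  have hs := h.smooth
  have hb : 0 < b := ha.trans_le hab
  set w := ddir (1, 0) (Function.uncurry u) with hw
  have hws : SmoothO w := hs.ddir (1, 0)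
  have cua : Continuous (u a) := hs.continuous_x ha
  have cub : Continuous (u b) := hs.continuous_x hb
  have cu := hs.continuous_max ha
  have cw := hws.continuous_max ha
  have c2 : Continuous (fun p : ℝ × ℝ => 2 * u (max p.1 a) p.2 * w (max p.1 a, p.2)) :=
    (continuous_const.mul cu).mul cw
  have hmx : ∀ t ∈ uIcc a b, max t a = t := by
    intro t ht
    rw [uIcc_of_le hab] at ht
    exact max_eq_left ht.1
  have step1 : energy u b - energy u a
      = ∫ x in (0:ℝ)..1, ∫ t in a..b, 2 * u (max t a) x * w (max t a, x) := by
    unfold energy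
    rw [← intervalIntegral.integral_sub (Continuous.intervalIntegrable (by fun_prop) _ _)
      (Continuous.intervalIntegrable (by fun_prop) _ _)]
    congr 1
    ext x
    symm
    refine intervalIntegral.integral_eq_sub_of_hasDerivAt (f := fun t => u t x ^ 2) ?_ ?_
    · intro t ht
      rw [hmx t ht]
      rw [uIcc_of_le hab] at ht
      have h1 := (hs.hasDerivAt_t (ha.trans_le ht.1) x).pow 2
      refine h1.congr_deriv ?_
      simp [Function.uncurry, hw]
    · apply Continuous.intervalIntegrable
      exact c2.comp (f := fun t : ℝ => (t, x)) (by fun_prop)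
  rw [step1, intervalIntegral_intervalIntegral_swap, ← intervalIntegral.integral_const_mul]
  · apply intervalIntegral.integral_congr
    intro t ht
    simp only [hmx t ht]
    rw [uIcc_of_le hab] at ht
    exact h.energy_rate (ha.trans_le ht.1)
  · have c3 : Continuous (Function.uncurry fun x t => 2 * u (max t a) x * w (max t a, x)) :=
      c2.comp continuous_swap
    have hk : IsCompact (uIcc (0:ℝ) 1 ×ˢ uIcc a b) := isCompact_uIcc.prod isCompact_uIcc
    exact (c3.continuousOn.integrableOn_compact hk).mono_set
      (prod_mono uIoc_subset_uIcc uIoc_subset_uIcc)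

lemma IsBurgersSolution.sob_eq (h : IsBurgersSolution f σ ν u) {t : ℝ} (ht : 0 < t) :
    sobLp 1 2 (u t) ^ 2 = ∫ x in (0:ℝ)..1, ddir (0, 1) (Function.uncurry u) (t, x) ^ 2 := by
  rw [sobLp_one_two (by rw [h.deriv_eq ht]; exact (h.smooth.ddir (0, 1)).continuous_x ht),
    h.deriv_eq ht]

lemma IsBurgersSolution.energy_eq' (h : IsBurgersSolution f σ ν u) {a b : ℝ} (ha : 0 < a)
    (hab : a ≤ b) :
    energy u b - energy u a = - 2 * ν * ∫ t in a..b, sobLp 1 2 (u t) ^ 2 := by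
  rw [h.energy_eq ha hab]
  congr 1
  apply intervalIntegral.integral_congr
  intro t ht
  rw [uIcc_of_le hab] at ht
  exact (h.sob_eq (ha.trans_le ht.1)).symm

lemma IsBurgersSolution.energy_lower (h : IsBurgersSolution f σ ν u) {Ct T : ℝ} (hT : 0 < T)
    (hC : 0 ≤ Ct)
    (hb : ∀ t, 0 ≤ t → sobLp 1 2 (u t) ^ 2 ≤ Ct * ν⁻¹) :
    energy u 0 - 2 * Ct * T ≤ energy u T := by
  have hν := h.hν
  have ht : Filter.Tendsto (fun a => energy u (max a 0) - 2 * Ct * T) (nhdsWithin 0 (Ioi 0))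
      (nhds (energy u (max 0 0) - 2 * Ct * T)) :=
    ((h.energy_continuous.tendsto 0).mono_left nhdsWithin_le_nhds).sub_const _
  rw [max_self] at ht
  refine le_of_tendsto ht ?_
  filter_upwards [Ioo_mem_nhdsGT hT] with a ha
  rw [max_eq_left ha.1.le]
  have h1 := h.energy_eq' ha.1 ha.2.le
  have h2 : ∫ t in a..T, sobLp 1 2 (u t) ^ 2 ≤ (Ct * ν⁻¹) * (T - a) := by
    have := intervalIntegral.norm_integral_le_of_norm_le_const (a := a) (b := T)
      (f := fun t => sobLp 1 2 (u t) ^ 2) (C := Ct * ν⁻¹) (fun t ht => by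
        rw [uIoc_of_le ha.2.le] at ht
        rw [Real.norm_of_nonneg (sq_nonneg _)]
        exact hb t (ha.1.trans ht.1).le)
    rw [abs_of_pos (by linarith [ha.2])] at this
    exact (le_abs_self _).trans this
  have h3 : ν * ∫ t in a..T, sobLp 1 2 (u t) ^ 2 ≤ ν * ((Ct * ν⁻¹) * (T - a)) :=
    mul_le_mul_of_nonneg_left h2 hν.le
  have h4 : ν * ((Ct * ν⁻¹) * (T - a)) = Ct * (T - a) := by field_simp
  nlinarith [ha.1]

lemma IsBurgersSolution.energy_upper (h : IsBurgersSolution f σ ν u) {T : ℝ} (hT : 0 < T) :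
    energy u T ≤ ((σ * T)⁻¹) ^ 2 := by
  have hσ := h.hσ
  have hK : ∀ x, ddir (0, 1) (Function.uncurry u) (T, x) ≤ (σ * T)⁻¹ := by
    intro x
    rw [← one_div, le_div_iff₀ (by positivity)]
    linarith [h.oleinik hT x]
  have hm : ∫ x in (0:ℝ)..1, u T x = 0 := by
    rw [intervalIntegral.integral_of_le zero_le_one]
    exact h.hmean T hT.le
  have ha := abs_le_of_deriv_le (fun x => h.smooth.hasDerivAt_x hT x) hK (h.hper T) hm
  have cu : Continuous (u T) := h.smooth.continuous_x hT
  have : energy u T ≤ ∫ x in (0:ℝ)..1, ((σ * T)⁻¹) ^ 2 := by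
    apply intervalIntegral.integral_mono_on zero_le_one
      (Continuous.intervalIntegrable (by fun_prop) _ _) (by simp)
    intro x _
    exact sq_le_sq' (abs_le.1 (ha x)).1 (abs_le.1 (ha x)).2
  simpa using this

lemma IsBurgersSolution.initial_bound (h : IsBurgersSolution f σ ν u) :
    0 < burgersD u ∧ ((burgersD u)⁻¹) ^ 2 ≤ energy u 0 := by
  have hc := h.continuous_init
  have h1 := integral_abs_pos hc (h.hper 0) h.hinit
  rw [← sobLp_zero_one hc] at h1
  have h2 : (sobLp 0 1 (u 0))⁻¹ ≤ burgersD u := le_max_left _ _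
  have h3 : 0 < burgersD u := lt_of_lt_of_le (inv_pos.2 h1) h2
  refine ⟨h3, ?_⟩
  have h4 : (burgersD u)⁻¹ ≤ sobLp 0 1 (u 0) := inv_le_of_inv_le₀ h1 h2
  have h5 := sq_integral_abs_le hc
  rw [← sobLp_zero_one hc] at h5
  exact le_trans (pow_le_pow_left₀ (inv_pos.2 h3).le h4 2) h5

end

/-- There is `c > 0` depending only on `f` and `D` such that for
every `ν ∈ (0,1]`, the time average over `[T₁,T₂]` satisfies
`{‖u(t)‖₁²} ≥ c ν⁻¹`. -/
theorem statement8 (f : ℝ → ℝ) (σ D Ct : ℝ) (hCt : 0 < Ct)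
    (hCtb : ∀ ν, 0 < ν → ν ≤ 1 →
      ∀ u : ℝ → ℝ → ℝ, IsBurgersSolution f σ ν u → burgersD u = D →
        ∀ t, 0 ≤ t → sobLp 1 2 (u t) ^ 2 ≤ Ct * ν⁻¹) :
    ∃ c > 0, ∀ ν, 0 < ν → ν ≤ 1 →
      ∀ u : ℝ → ℝ → ℝ, IsBurgersSolution f σ ν u → burgersD u = D →
        c * ν⁻¹ ≤ timeAvg (burgersT₁ D Ct) (burgersT₂ σ D Ct)
              (fun t => sobLp 1 2 (u t) ^ 2) := by
  by_cases hpos : 0 < D ∧ 0 < σ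
  swap
  · refine ⟨1, one_pos, fun ν _ _ u hu hD => ?_⟩
    exact absurd ⟨hD ▸ hu.initial_bound.1, hu.hσ⟩ hpos
  obtain ⟨hD, hσ⟩ := hpos
  set T₁ := burgersT₁ D Ct with hT₁
  set T₂ := burgersT₂ σ D Ct with hT₂
  have hT₁pos : 0 < T₁ := by rw [hT₁, burgersT₁]; positivity
  have h12 : T₁ < T₂ := by
    have : 3 / 2 * T₁ ≤ T₂ := le_max_left _ _
    linarith
  have hT₂D : 2 * D * σ⁻¹ ≤ T₂ := le_max_right _ _
  have hT₂pos : 0 < T₂ := hT₁pos.trans h12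
  have hsub : 0 < T₂ - T₁ := sub_pos.2 h12
  refine ⟨(T₂ - T₁)⁻¹ * ((D⁻¹) ^ 2 / 8), by positivity, fun ν hν hν1 u hu huD => ?_⟩
  have h0 := hu.initial_bound.2
  rw [huD] at h0
  have h1 := hu.energy_lower hT₁pos hCt.le (hCtb ν hν hν1 u hu huD)
  have h2 := hu.energy_upper hT₂pos
  have h3 := hu.energy_eq' hT₁pos h12.le
  have h4 : 2 * Ct * T₁ = (D⁻¹) ^ 2 / 2 := by
    rw [hT₁, burgersT₁]
    field_simp
    norm_num
  have h5 : (σ * T₂)⁻¹ ≤ D⁻¹ / 2 := by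
    have : 2 * D ≤ σ * T₂ := by
      calc 2 * D = σ * (2 * D * σ⁻¹) := by field_simp
        _ ≤ σ * T₂ := mul_le_mul_of_nonneg_left hT₂D hσ.le
    calc (σ * T₂)⁻¹ ≤ (2 * D)⁻¹ := inv_anti₀ (by positivity) this
      _ = D⁻¹ / 2 := by field_simp
  have h6 : ((σ * T₂)⁻¹) ^ 2 ≤ (D⁻¹ / 2) ^ 2 := pow_le_pow_left₀ (by positivity) h5 2
  have h7 : (D⁻¹) ^ 2 / 8 ≤ (∫ t in T₁..T₂, sobLp 1 2 (u t) ^ 2) * ν := by nlinarith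
  rw [timeAvg, mul_assoc]
  refine mul_le_mul_of_nonneg_left ?_ (inv_pos.2 hsub).le
  rw [← div_eq_mul_inv, div_le_iff₀ hν]
  exact h7
end
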